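/- Let W be the Wiener measure on Ω. For ξ > 0 let E(ξ) = {ω ∈ Ω : the local order ord_loc W(ω) exists and equals ξ} and E^crit(ξ) = E(ξ) ∩ Ω^crit. Then: (i) for every ξ ≥ 2, the Hausdorff order ord_H E^crit(ξ) = 1 + ξ/2 (in particular E^crit(ξ) is non-empty), and consequently ord_H E(ξ) ≥ 1 + ξ/2; (ii) for every 0 < ξ < 2, E(ξ) = ∅ (in particular E^crit(ξ) = ∅). -/

import Mathlib

open scoped ENNReal NNReal Topology
open Filter MeasureTheory Metric Set

noncomputable section

namespace Multifractal


/-- The `δ`-level Hausdorff pre-measure `H^h_δ` associated to a gauge `h`. -/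
def hMeasAux {X : Type*} [MetricSpace X] (h : ℝ → ℝ) (δ : ℝ≥0∞) (E : Set X) : ℝ≥0∞ :=
  ⨅ (c : ℕ → X) (r : ℕ → ℝ) (_ : ∀ n, 0 < r n ∧ ENNReal.ofReal (r n) ≤ δ)
    (_ : E ⊆ ⋃ n, Metric.ball (c n) (r n)), ∑' n, ENNReal.ofReal (h (r n))

/-- The `h`-Hausdorff measure. -/
def hMeas {X : Type*} [MetricSpace X] (h : ℝ → ℝ) (E : Set X) : ℝ≥0∞ :=
  ⨆ (δ : ℝ≥0∞) (_ : 0 < δ), hMeasAux h δ E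

/-- `Ω`: continuous paths on `[0,1]` vanishing at `0`, with the uniform metric. -/
abbrev PathSpace : Type := {f : C(unitInterval, ℝ) // f 0 = 0}

instance : MeasurableSpace PathSpace := borel PathSpace
instance : BorelSpace PathSpace := ⟨rfl⟩

/-- `μ` is a centered Gaussian process measure on path space with covariance `K`:
a probability measure under which every finite linear combination of coordinates
is a centered real Gaussian with the variance given by `K`. -/
def IsGaussianProcess (μ : Measure PathSpace) (K : unitInterval → unitInterval → ℝ) : Prop :=
  IsProbabilityMeasure μ ∧
  ∀ (n : ℕ) (t : Fin n → unitInterval) (c : Fin n → ℝ),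
    Measure.map (fun ω : PathSpace => ∑ i, c i * ω.1 (t i)) μ =
      ProbabilityTheory.gaussianReal 0
        (Real.toNNReal (∑ i, ∑ j, c i * c j * K (t i) (t j)))

/-- `W` is the Wiener measure: the coordinate process is centered Gaussian with
covariance `min s t`. -/
def IsWienerMeasure (W : Measure PathSpace) : Prop :=
  IsGaussianProcess W (fun s t => min (s : ℝ) (t : ℝ))

/-- `μ` is the law of fractional Brownian motion with Hurst parameter `H`. -/
def IsFBM (H : ℝ) (μ : Measure PathSpace) : Prop :=
  IsGaussianProcess μ (fun s t =>
    ((s : ℝ) ^ (2*H) + (t : ℝ) ^ (2*H) - |(t : ℝ) - (s : ℝ)| ^ (2*H)) / 2)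

/-- Clamping of a real number into the unit interval. -/
def clampI (t : ℝ) : unitInterval :=
  ⟨min (max t 0) 1, Set.mem_Icc.mpr ⟨le_min (le_max_right _ _) zero_le_one, min_le_right _ _⟩⟩

/-- The grid point `j/n` of the unit interval. -/
def gridPt (n j : ℕ) : unitInterval := clampI ((j : ℝ) / n)

/-- The discrete quadratic variation `Q_n(ω)`. -/
def Qvar (ω : PathSpace) (n : ℕ) : ℝ :=
  Real.sqrt ((1 / (n : ℝ)) *
    ∑ i ∈ Finset.range n, (ω.1 (gridPt n (i+1)) - ω.1 (gridPt n i)) ^ 2)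

/-- Lower Orey exponent `q^-(ω)`. -/
def oreyLower (ω : PathSpace) : EReal :=
  liminf (fun n : ℕ => ((-Real.log (Qvar ω n) / Real.log n : ℝ) : EReal)) atTop

/-- Upper Orey exponent `q^+(ω)`. -/
def oreyUpper (ω : PathSpace) : EReal :=
  limsup (fun n : ℕ => ((-Real.log (Qvar ω n) / Real.log n : ℝ) : EReal)) atTop

/-- The set `C_a` of `a`-Hölder paths. -/
def holderSet (a : ℝ) : Set PathSpace :=
  {ω | ∃ C : ℝ, ∀ x y : unitInterval, |ω.1 x - ω.1 y| ≤ C * |(x : ℝ) - (y : ℝ)| ^ a}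

/-- The set `C_a^- = ⋂_{0<b<a} C_b` of nearly `a`-Hölder paths. -/
def holderMinus (a : ℝ) : Set PathSpace := ⋂ b ∈ Set.Ioo (0:ℝ) a, holderSet b

/-- The set `C_q^crit` of critical `q`-Hölder paths: nearly `q`-Hölder paths whose
Orey exponent exists and equals `q`. -/
def holderCrit (q : ℝ) : Set PathSpace :=
  {ω | ω ∈ holderMinus q ∧ oreyLower ω = (q : EReal) ∧ oreyUpper ω = (q : EReal)}

/-- The set `Ω^crit` of critical Hölder paths. -/
def pathCrit : Set PathSpace := ⋃ q ∈ Set.Ioo (0:ℝ) 1, holderCrit q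

/-- The lower local order of a measure `μ` on path space at `ω`. -/
def lowerLocOrd (μ : Measure PathSpace) (ω : PathSpace) : EReal :=
  liminf (fun ε : ℝ =>
    ((Real.log (-Real.log ((μ (Metric.ball ω ε)).toReal)) / (-Real.log ε) : ℝ) : EReal))
    (𝓝[>] (0:ℝ))

/-- The upper local order of a measure `μ` on path space at `ω`. -/
def upperLocOrd (μ : Measure PathSpace) (ω : PathSpace) : EReal :=
  limsup (fun ε : ℝ =>
    ((Real.log (-Real.log ((μ (Metric.ball ω ε)).toReal)) / (-Real.log ε) : ℝ) : EReal))
    (𝓝[>] (0:ℝ))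

/-- The Hausdorff order of a set of paths: `sup {α > 0 : H^{h_α}(A) = ∞}` where
`h_α(ε) = exp(-ε^{-α})`. -/
def ordH (A : Set PathSpace) : ℝ≥0∞ :=
  ⨆ (α : ℝ) (_ : 0 < α ∧ hMeas (fun ε : ℝ => Real.exp (-(ε ^ (-α)))) A = ∞),
    ENNReal.ofReal α

/-- The level set `E(ξ)` of paths at which the local order of `μ` exists and
equals `ξ`. -/
def levelOrd (μ : Measure PathSpace) (ξ : ℝ) : Set PathSpace :=
  {ω | lowerLocOrd μ ω = (ξ : EReal) ∧ upperLocOrd μ ω = (ξ : EReal)}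

/-- The cylinder `C_n(ω̄, ε)` around `ω̄` of depth `n` and radius `ε`. -/
def cylinder (ωb : PathSpace) (n : ℕ) (ε : ℝ) : Set PathSpace :=
  {ω | ∀ j ∈ Finset.Icc 1 n, |ω.1 (gridPt n j) - ωb.1 (gridPt n j)| ≤ ε}

/-- The affine interpolation `L̄_j` of `ω̄` on `[(j-1)/n, j/n]`, evaluated at `t`. -/
def affInterp (ωb : PathSpace) (n j : ℕ) (t : ℝ) : ℝ :=
  ωb.1 (gridPt n (j-1)) +
    (t - ((j-1 : ℕ) : ℝ) / n) * n * (ωb.1 (gridPt n j) - ωb.1 (gridPt n (j-1)))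

/-- The maximal deviation `Δ_n(ω̄)` of `ω̄` from its chords on the `1/n`-grid. -/
def chordDev (ωb : PathSpace) (n : ℕ) : ℝ :=
  sSup {d : ℝ | ∃ j ∈ Finset.Icc 1 n, ∃ t ∈ Set.Icc (((j-1 : ℕ) : ℝ) / n) ((j : ℝ) / n),
    d = |ωb.1 (clampI t) - affInterp ωb n j t|}

/-!
Under the Wiener measure the Schauder coefficients of a path are independent centered Gaussians,
of variance `2 ^ (-(k + 2))` at level `k`, and the increments over a grid are independent
Gaussians as well. A ball of radius `ε` constrains all of them. At a level `k` with
`2 ^ (-k) ≈ ε ^ 2` each of the `2 ^ k` coefficients lies in an interval of conditional probability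
at most `1 / 2`, so no path has local order below `2`. Around a path of Orey exponent `q` the
Gaussian densities of the `n ≈ ε ^ (-1/q)` increments cost a further
`n ^ 2 * Q_n ^ 2 ≈ ε ^ (-(2 / q - 2))`. Conversely, for a nearly `q`-Hölder path the ball contains
the paths whose coefficients are close to those of the center below level `≈ log n / log 2` and
small above it, an event whose probability has the same order by independence. So the critical
`q`-Hölder paths have local order exactly `2 / q - 2`, and `ξ ≥ 2` corresponds to
`q = 2 / (ξ + 2) ≤ 1 / 2`.

The Hausdorff order of this level set is `1 / q = 1 + ξ / 2`. Choosing the signs of the Schauder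
coefficients `± 2 ^ (-q * k)` independently gives critical paths; a ball of radius
`≈ 2 ^ (-q * k)` determines all the signs of level `k`, hence has mass at most `2 ^ (-2 ^ k)`, and
the mass distribution principle applies. For the upper bound, a set of `b`-Hölder paths with a
fixed Hölder constant is covered by `(2 n + 1) ^ (n + 1)` balls of radius `≈ n ^ (-b)`, for every
`b < q`.
-/

section

open ProbabilityTheory

/-! ### Gaussian estimates -/

lemma hasSubgaussianMGF_id_gaussianReal (v : ℝ≥0) :
    HasSubgaussianMGF id v (gaussianReal 0 v) where
  integrable_exp_mul t := integrable_exp_mul_gaussianReal t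
  mgf_le t := by simp [mgf_id_gaussianReal]

lemma gaussianReal_Ici_le (v : ℝ≥0) {x : ℝ} (hx : 0 ≤ x) :
    (gaussianReal 0 v).real (Ici x) ≤ Real.exp (-x ^ 2 / (2 * v)) :=
  (hasSubgaussianMGF_id_gaussianReal v).measure_ge_le hx

lemma gaussianReal_Iic_neg_le (v : ℝ≥0) {x : ℝ} (hx : 0 ≤ x) :
    (gaussianReal 0 v).real (Iic (-x)) ≤ Real.exp (-x ^ 2 / (2 * v)) := by
  have h := (hasSubgaussianMGF_id_gaussianReal v).neg.measure_ge_le hx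
  have hset : {y : ℝ | x ≤ (-id) y} = Iic (-x) := by
    ext y
    simp [le_neg]
  rwa [hset] at h

lemma one_sub_two_mul_exp_le_gaussianReal_Icc (v : ℝ≥0) {x : ℝ} (hx : 0 ≤ x) :
    1 - 2 * Real.exp (-x ^ 2 / (2 * v)) ≤ (gaussianReal 0 v).real (Icc (-x) x) := by
  have hcover : (univ : Set ℝ) ⊆ Icc (-x) x ∪ (Ici x ∪ Iic (-x)) := by
    intro y _
    rcases le_total y (-x) with h | h
    · exact .inr (.inr h)
    · exact (le_total y x).imp (fun h' => ⟨h, h'⟩) .inl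
  have hone : (1 : ℝ) ≤ (gaussianReal 0 v).real (Icc (-x) x) +
      ((gaussianReal 0 v).real (Ici x) + (gaussianReal 0 v).real (Iic (-x))) := by
    rw [← probReal_univ (μ := gaussianReal 0 v)]
    exact (measureReal_mono hcover).trans <| (measureReal_union_le _ _).trans <|
      add_le_add le_rfl (measureReal_union_le _ _)
  linarith [gaussianReal_Ici_le v hx, gaussianReal_Iic_neg_le v hx]

lemma gaussianReal_real_eq_setIntegral (m : ℝ) {v : ℝ≥0} (hv : v ≠ 0) (s : Set ℝ) :
    (gaussianReal m v).real s = ∫ x in s, gaussianPDFReal m v x := by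
  rw [measureReal_def, gaussianReal_apply_eq_integral _ hv, ENNReal.toReal_ofReal
    (integral_nonneg fun x => gaussianPDFReal_nonneg _ _ _)]

lemma gaussianReal_Icc_le (m : ℝ) {v : ℝ≥0} (hv : v ≠ 0) {a b : ℝ} (hab : a ≤ b) :
    (gaussianReal m v).real (Icc a b) ≤ (b - a) * (√(2 * Real.pi * v))⁻¹ := by
  have hpdf : ∀ x, gaussianPDFReal m v x ≤ (√(2 * Real.pi * v))⁻¹ := fun x =>
    mul_le_of_le_one_right (by positivity) <| Real.exp_le_one_iff.2 <|
      div_nonpos_of_nonpos_of_nonneg (neg_nonpos.2 (sq_nonneg _)) (by positivity)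
  calc (gaussianReal m v).real (Icc a b) = ∫ x in Icc a b, gaussianPDFReal m v x :=
        gaussianReal_real_eq_setIntegral m hv _
    _ ≤ ∫ _ in Icc a b, (√(2 * Real.pi * v))⁻¹ :=
        setIntegral_mono (integrable_gaussianPDFReal m v).integrableOn
          continuous_const.integrableOn_Icc hpdf
    _ = (b - a) * (√(2 * Real.pi * v))⁻¹ := by simp [hab]

lemma le_gaussianReal_Icc (m : ℝ) {v : ℝ≥0} (hv : v ≠ 0) {a b R : ℝ} (hab : a ≤ b)
    (hR : ∀ x ∈ Icc a b, (x - m) ^ 2 ≤ R) :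
    (b - a) * ((√(2 * Real.pi * v))⁻¹ * Real.exp (-R / (2 * v))) ≤
      (gaussianReal m v).real (Icc a b) := by
  calc (b - a) * ((√(2 * Real.pi * v))⁻¹ * Real.exp (-R / (2 * v)))
      = ∫ _ in Icc a b, (√(2 * Real.pi * v))⁻¹ * Real.exp (-R / (2 * v)) := by simp [hab]
    _ ≤ ∫ x in Icc a b, gaussianPDFReal m v x := by
        refine setIntegral_mono_on continuous_const.integrableOn_Icc
          (integrable_gaussianPDFReal m v).integrableOn measurableSet_Icc fun x hx => ?_
        have := hR x hx
        rw [gaussianPDFReal]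
        gcongr
    _ = (gaussianReal m v).real (Icc a b) := (gaussianReal_real_eq_setIntegral m hv _).symm

/-! ### Gaussian processes on path space -/

/-- The bilinear form `(L, L') ↦ ∑ₛ ∑ₜ L s * L' t * K s t` of a kernel `K` on finitely supported
signed measures `L`, `L'` on `[0, 1]`. Integrating a path against such a measure is written
`Finsupp.linearCombination ℝ ω L`. -/
def kernelForm (K : unitInterval → unitInterval → ℝ) :
    (unitInterval →₀ ℝ) →ₗ[ℝ] (unitInterval →₀ ℝ) →ₗ[ℝ] ℝ :=
  Finsupp.linearCombination ℝ fun s => Finsupp.linearCombination ℝ (K s)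

lemma kernelForm_apply (K : unitInterval → unitInterval → ℝ) (L L' : unitInterval →₀ ℝ) :
    kernelForm K L L' =
      Finsupp.linearCombination ℝ (fun s => Finsupp.linearCombination ℝ (K s) L') L := by
  simp [kernelForm, Finsupp.linearCombination_apply, Finsupp.sum, LinearMap.sum_apply]

lemma continuous_linearCombination_path (L : unitInterval →₀ ℝ) :
    Continuous fun ω : PathSpace => Finsupp.linearCombination ℝ ω.1 L := by
  simp only [Finsupp.linearCombination_apply, Finsupp.sum]
  fun_prop

section

variable {μ : Measure PathSpace} {K : unitInterval → unitInterval → ℝ}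

lemma IsGaussianProcess.map_linearCombination (hμ : IsGaussianProcess μ K)
    (L : unitInterval →₀ ℝ) :
    μ.map (fun ω : PathSpace => Finsupp.linearCombination ℝ ω.1 L) =
      gaussianReal 0 (kernelForm K L L).toNNReal := by
  let e := L.support.equivFin
  have sum_support : ∀ f : unitInterval → ℝ, ∑ i, f (e.symm i) = ∑ t ∈ L.support, f t := by
    intro f
    rw [e.symm.sum_comp (fun t : L.support => f t), Finset.sum_coe_sort]
  convert hμ.2 _ (fun i => (e.symm i : unitInterval)) (fun i => L (e.symm i)) using 4 with ω
  · exact (sum_support fun t => L t * ω.1 t).symm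
  · rw [sum_support fun s => ∑ j, L s * L (e.symm j) * K s (e.symm j), kernelForm_apply,
      Finsupp.linearCombination_apply]
    refine Finset.sum_congr rfl fun s _ => ?_
    simp only [sum_support fun t => L s * L t * K s t, Finsupp.linearCombination_apply, Finsupp.sum,
      smul_eq_mul, Finset.mul_sum]
    exact Finset.sum_congr rfl fun t _ => (mul_assoc _ _ _).symm

lemma IsGaussianProcess.hasGaussianLaw_linearCombination (hμ : IsGaussianProcess μ K)
    {ι : Type*} [Finite ι] (L : ι → unitInterval →₀ ℝ) :
    HasGaussianLaw (fun (ω : PathSpace) i => Finsupp.linearCombination ℝ ω.1 (L i)) μ where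
  isGaussian_map := by
    classical
    have := Fintype.ofFinite ι
    have hmeas : Measurable fun (ω : PathSpace) i => Finsupp.linearCombination ℝ ω.1 (L i) :=
      measurable_pi_lambda _ fun i => (continuous_linearCombination_path (L i)).measurable
    refine isGaussian_of_map_eq_gaussianReal fun φ => ?_
    have hφ : (φ ∘ fun (ω : PathSpace) i => Finsupp.linearCombination ℝ ω.1 (L i)) =
        fun ω => Finsupp.linearCombination ℝ ω.1 (∑ i, φ (Pi.single i 1) • L i) := by
      ext ω
      simp only [Function.comp_apply, map_sum, map_smul, smul_eq_mul]
      rw [pi_eq_sum_univ' fun i => Finsupp.linearCombination ℝ ω.1 (L i)]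
      simp [mul_comm]
    rw [Measure.map_map φ.continuous.measurable hmeas, hφ, hμ.map_linearCombination]
    exact ⟨_, _, rfl⟩

lemma IsGaussianProcess.variance_linearCombination (hμ : IsGaussianProcess μ K)
    {L : unitInterval →₀ ℝ} (hL : 0 ≤ kernelForm K L L) :
    Var[fun ω : PathSpace => Finsupp.linearCombination ℝ ω.1 L; μ] = kernelForm K L L := by
  have hmeas := (continuous_linearCombination_path L).measurable
  rw [← Function.id_comp (fun ω : PathSpace => Finsupp.linearCombination ℝ ω.1 L),
    ← variance_map aemeasurable_id hmeas.aemeasurable,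
    hμ.map_linearCombination, variance_id_gaussianReal, Real.coe_toNNReal _ hL]

lemma IsGaussianProcess.iIndepFun_linearCombination (hμ : IsGaussianProcess μ K) {ι : Type*}
    {L : ι → unitInterval →₀ ℝ} (hL : ∀ i, 0 ≤ kernelForm K (L i) (L i))
    (horth : ∀ i j, i ≠ j → kernelForm K (L i) (L j) = 0) :
    iIndepFun (fun i (ω : PathSpace) => Finsupp.linearCombination ℝ ω.1 (L i)) μ := by
  have := hμ.1
  have memLp : ∀ i, MemLp (fun ω : PathSpace => Finsupp.linearCombination ℝ ω.1 (L i)) 2 μ :=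
    fun i => ((hμ.hasGaussianLaw_linearCombination fun _ : Unit => L i).eval ()).memLp_two
  have covariance : ∀ i j, i ≠ j → cov[fun ω : PathSpace => Finsupp.linearCombination ℝ ω.1 (L i),
      fun ω => Finsupp.linearCombination ℝ ω.1 (L j); μ] = 0 := by
    intro i j hij
    have hsum : kernelForm K (L i + L j) (L i + L j) =
        kernelForm K (L i) (L i) + kernelForm K (L j) (L j) := by
      simp [horth i j hij, horth j i hij.symm]
    have hvar := variance_fun_add (memLp i) (memLp j)
    simp only [← map_add] at hvar
    rw [hμ.variance_linearCombination (hL i), hμ.variance_linearCombination (hL j),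
      hμ.variance_linearCombination (hsum ▸ add_nonneg (hL i) (hL j)), hsum] at hvar
    linarith
  refine iIndepFun_iff_finset.2 fun s => ?_
  exact (hμ.hasGaussianLaw_linearCombination fun i : s => L i).iIndepFun_of_covariance_eq_zero
    fun i j hij => covariance i j (Subtype.coe_injective.ne hij)

end

/-! ### Dyadic intervals and Schauder coefficients -/

lemma coe_gridPt {n j : ℕ} (h : j ≤ n) : (gridPt n j : ℝ) = j / n := by
  have h1 : (j : ℝ) / n ≤ 1 := div_le_one_of_le₀ (by exact_mod_cast h) (by positivity)
  have h0 : (0 : ℝ) ≤ j / n := by positivity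
  simp [gridPt, clampI, max_eq_left h0, min_eq_left h1]

lemma gridPt_zero_right (n : ℕ) : gridPt n 0 = 0 :=
  Subtype.ext (by simp [coe_gridPt])

lemma gridPt_self {n : ℕ} (hn : n ≠ 0) : gridPt n n = 1 :=
  Subtype.ext (by simp [coe_gridPt, hn])

lemma gridPt_mul_mul (n j : ℕ) {d : ℕ} (hd : d ≠ 0) : gridPt (n * d) (j * d) = gridPt n j := by
  have hd' : (d : ℝ) ≠ 0 := by exact_mod_cast hd
  rw [gridPt, gridPt]
  congr 1
  push_cast
  exact mul_div_mul_right _ _ hd'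

lemma gridPt_two_pow_eq {m n : ℕ} (hmn : m ≤ n) (j : ℕ) :
    gridPt (2 ^ m) j = gridPt (2 ^ n) (j * 2 ^ (n - m)) := by
  rw [← pow_mul_pow_sub 2 hmn, gridPt_mul_mul _ _ (by positivity)]

lemma tendsto_gridPt_floor (t : unitInterval) :
    Tendsto (fun k : ℕ => gridPt (2 ^ k) ⌊(t : ℝ) * 2 ^ k⌋₊) atTop (𝓝 t) := by
  rw [tendsto_subtype_rng]
  have hlim : Tendsto (fun k : ℕ => (⌊(t : ℝ) * 2 ^ k⌋₊ : ℝ) / 2 ^ k) atTop (𝓝 (t : ℝ)) :=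
    (tendsto_nat_floor_mul_div_atTop t.2.1).comp (tendsto_pow_atTop_atTop_of_one_lt one_lt_two)
  refine hlim.congr fun k => ?_
  rw [coe_gridPt (Nat.floor_le_of_le ?_)]
  · push_cast
    rfl
  · push_cast
    exact mul_le_of_le_one_left (by positivity) t.2.2

/-- Indices of the Faber–Schauder system: `⟨k, j⟩` stands for the dyadic interval
`[j / 2 ^ k, (j + 1) / 2 ^ k]`. -/
abbrev DyadicIndex : Type := Σ k : ℕ, Fin (2 ^ k)

lemma DyadicIndex.two_mul_add_one_le (i : DyadicIndex) :
    2 * (i.2 : ℕ) + 1 ≤ 2 ^ (i.1 + 1) := by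
  have := i.2.2
  rw [pow_succ]
  lia

/-- The Schauder functionals as signed measures: evaluation at `1` for `none`, and the deviation
at the midpoint from the chord over the dyadic interval `i` for `some i`. -/
def schauderFunctional : Option DyadicIndex → unitInterval →₀ ℝ
  | none => .single 1 1
  | some i => .single (gridPt (2 ^ (i.1 + 1)) (2 * i.2 + 1)) 1 -
      (1 / 2 : ℝ) • (.single (gridPt (2 ^ i.1) i.2) 1 + .single (gridPt (2 ^ i.1) (i.2 + 1)) 1)

/-- The Faber–Schauder coefficients of a function on the unit interval. -/
def schauderCoeff (f : unitInterval → ℝ) (a : Option DyadicIndex) : ℝ :=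
  Finsupp.linearCombination ℝ f (schauderFunctional a)

@[simp]
lemma schauderCoeff_none (f : unitInterval → ℝ) : schauderCoeff f none = f 1 := by
  simp [schauderCoeff, schauderFunctional]

lemma schauderCoeff_some (f : unitInterval → ℝ) (i : DyadicIndex) :
    schauderCoeff f (some i) = f (gridPt (2 ^ (i.1 + 1)) (2 * i.2 + 1)) -
      (f (gridPt (2 ^ i.1) i.2) + f (gridPt (2 ^ i.1) (i.2 + 1))) / 2 := by
  simp only [schauderCoeff, schauderFunctional, map_sub, map_smul, map_add,
    Finsupp.linearCombination_single, smul_eq_mul]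
  ring

lemma schauderCoeff_sub (f g : unitInterval → ℝ) (a : Option DyadicIndex) :
    schauderCoeff (fun t => f t - g t) a = schauderCoeff f a - schauderCoeff g a := by
  simp [schauderCoeff, Finsupp.linearCombination_apply, Finsupp.sum, mul_sub]

lemma abs_schauderCoeff_some_le {f : unitInterval → ℝ} {B : ℝ} (hf : ∀ t, |f t| ≤ B)
    (i : DyadicIndex) : |schauderCoeff f (some i)| ≤ 2 * B := by
  have hm := abs_le.1 (hf (gridPt (2 ^ (i.1 + 1)) (2 * i.2 + 1)))
  have hl := abs_le.1 (hf (gridPt (2 ^ i.1) i.2))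
  have hr := abs_le.1 (hf (gridPt (2 ^ i.1) (i.2 + 1)))
  rw [schauderCoeff_some, abs_le]
  constructor <;> linarith

lemma schauderCoeff_some_eq_zero {f : unitInterval → ℝ} {n : ℕ}
    (hf : ∀ j ≤ 2 ^ n, f (gridPt (2 ^ n) j) = 0) {i : DyadicIndex} (hi : i.1 < n) :
    schauderCoeff f (some i) = 0 := by
  have coarser : ∀ m ≤ n, ∀ j ≤ 2 ^ m, f (gridPt (2 ^ m) j) = 0 := by
    intro m hm j hj
    rw [gridPt_two_pow_eq hm]
    exact hf _ (by rw [← pow_mul_pow_sub 2 hm]; gcongr)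
  rw [schauderCoeff_some, coarser _ hi _ i.two_mul_add_one_le, coarser _ hi.le _ i.2.2.le,
    coarser _ hi.le _ i.2.2]
  norm_num

lemma abs_gridPt_le_of_schauderCoeff_le {f : unitInterval → ℝ} (h0 : f 0 = 0) {c : ℝ}
    {e : ℕ → ℝ} (he : ∀ k, 0 ≤ e k) (hnone : |schauderCoeff f none| ≤ c)
    (hsome : ∀ i : DyadicIndex, |schauderCoeff f (some i)| ≤ e i.1) (K : ℕ) :
    ∀ j ≤ 2 ^ K, |f (gridPt (2 ^ K) j)| ≤ c + ∑ k ∈ Finset.range K, e k := by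
  induction K with
  | zero =>
    intro j hj
    rw [schauderCoeff_none] at hnone
    obtain rfl | rfl : j = 0 ∨ j = 1 := by rw [pow_zero] at hj; lia
    · simpa [gridPt_zero_right, h0] using (abs_nonneg _).trans hnone
    · simpa [gridPt_self] using hnone
  | succ K ih =>
    intro j hj
    rw [Finset.sum_range_succ]
    rcases Nat.even_or_odd' j with ⟨i, rfl | rfl⟩
    · have hcoarse := ih i (by rw [pow_succ] at hj; lia)
      rw [pow_succ, mul_comm 2 i, gridPt_mul_mul _ _ two_ne_zero]
      linarith [he K]
    · have hi : i < 2 ^ K := by rw [pow_succ] at hj; lia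
      have hcoeff := hsome ⟨K, i, hi⟩
      rw [schauderCoeff_some] at hcoeff
      have hl := ih i hi.le
      have hr := ih (i + 1) hi
      rw [abs_le] at *
      constructor <;> linarith [hcoeff.1, hcoeff.2, hl.1, hl.2, hr.1, hr.2]

lemma abs_le_of_schauderCoeff_le {f : unitInterval → ℝ} (hf : Continuous f) (h0 : f 0 = 0)
    {c : ℝ} {e : ℕ → ℝ} (he : ∀ k, 0 ≤ e k) (hnone : |schauderCoeff f none| ≤ c)
    (hsome : ∀ i : DyadicIndex, |schauderCoeff f (some i)| ≤ e i.1) {B : ℝ}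
    (hB : ∀ K, c + ∑ k ∈ Finset.range K, e k ≤ B) (t : unitInterval) : |f t| ≤ B := by
  refine le_of_tendsto ((hf.abs.tendsto t).comp (tendsto_gridPt_floor t))
    (Eventually.of_forall fun k =>
      (abs_gridPt_le_of_schauderCoeff_le h0 he hnone hsome k _ ?_).trans (hB k))
  refine Nat.floor_le_of_le ?_
  push_cast
  exact mul_le_of_le_one_left (by positivity) t.2.2

/-- The tent function of height `1` over the dyadic interval `i`. -/
def tent (i : DyadicIndex) (t : ℝ) : ℝ :=
  max 0 (1 - |2 ^ (i.1 + 1) * t - (2 * i.2 + 1)|)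

lemma continuous_tent (i : DyadicIndex) : Continuous (tent i) := by
  unfold tent
  fun_prop

lemma tent_nonneg (i : DyadicIndex) (t : ℝ) : 0 ≤ tent i t :=
  le_max_left _ _

lemma tent_le_one (i : DyadicIndex) (t : ℝ) : tent i t ≤ 1 :=
  max_le zero_le_one (sub_le_self _ (abs_nonneg _))

lemma abs_tent_sub_le (i : DyadicIndex) (x y : ℝ) :
    |tent i x - tent i y| ≤ 2 ^ (i.1 + 1) * |x - y| := by
  calc |tent i x - tent i y|
      ≤ |(1 - |2 ^ (i.1 + 1) * x - (2 * i.2 + 1)|) -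
          (1 - |2 ^ (i.1 + 1) * y - (2 * i.2 + 1)|)| := by
        simpa only [tent, max_comm (0 : ℝ)] using abs_sup_sub_sup_le_abs _ _ _
    _ = |(|2 ^ (i.1 + 1) * y - (2 * i.2 + 1)| - |2 ^ (i.1 + 1) * x - (2 * i.2 + 1)|)| := by
        congr 1
        ring
    _ ≤ |2 ^ (i.1 + 1) * y - (2 * i.2 + 1) - (2 ^ (i.1 + 1) * x - (2 * i.2 + 1))| :=
        abs_abs_sub_abs_le_abs_sub _ _
    _ = 2 ^ (i.1 + 1) * |x - y| := by
        rw [sub_sub_sub_cancel_right, ← mul_sub, abs_mul, abs_sub_comm,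
          abs_of_pos (by positivity)]

lemma tent_eq_zero_of_one_le {i : DyadicIndex} {t : ℝ}
    (h : 1 ≤ |2 ^ (i.1 + 1) * t - (2 * i.2 + 1)|) : tent i t = 0 :=
  max_eq_left (by linarith)

lemma one_le_abs_two_mul_intCast_add_one (n : ℤ) : (1 : ℝ) ≤ |2 * (n : ℝ) + 1| := by
  exact_mod_cast Int.one_le_abs (by lia : 2 * n + 1 ≠ 0)

lemma tent_gridPt (i : DyadicIndex) {m : ℕ} (hm : m ≤ 2 ^ i.1) :
    tent i (gridPt (2 ^ i.1) m) = 0 := by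
  refine tent_eq_zero_of_one_le ((one_le_abs_two_mul_intCast_add_one (m - i.2 - 1)).trans_eq ?_)
  rw [coe_gridPt hm, pow_succ]
  push_cast
  congr 1
  field_simp
  ring

lemma tent_gridPt_midpoint (i : DyadicIndex) {m : ℕ} (hm : m < 2 ^ i.1) :
    tent i (gridPt (2 ^ (i.1 + 1)) (2 * m + 1)) = if m = i.2 then 1 else 0 := by
  have hpt : (2 : ℝ) ^ (i.1 + 1) * gridPt (2 ^ (i.1 + 1)) (2 * m + 1) = 2 * m + 1 := by
    rw [coe_gridPt (DyadicIndex.two_mul_add_one_le ⟨i.1, m, hm⟩)]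
    push_cast
    field_simp
  split_ifs with h
  · simp [tent, hpt, ← h]
  · refine tent_eq_zero_of_one_le ?_
    have hne : (m : ℤ) - i.2 ≠ 0 := sub_ne_zero.2 (by exact_mod_cast h)
    have hone : (1 : ℝ) ≤ |(m : ℝ) - i.2| := by exact_mod_cast Int.one_le_abs hne
    rw [hpt, add_sub_add_right_eq_sub, ← mul_sub, abs_mul, abs_two]
    linarith

lemma min_sub_average_min (s m : ℝ) {h : ℝ} (hh : 0 ≤ h) :
    min s m - (min s (m - h) + min s (m + h)) / 2 = max 0 (h - |s - m|) / 2 := by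
  rcases le_total s m with hsm | hsm
  · rw [abs_of_nonpos (by linarith), min_eq_left hsm, min_eq_left (by linarith : s ≤ m + h)]
    rcases le_total s (m - h) with h' | h'
    · rw [min_eq_left h', max_eq_left (by linarith)]
      ring
    · rw [min_eq_right h', max_eq_right (by linarith)]
      ring
  · rw [abs_of_nonneg (by linarith), min_eq_right hsm, min_eq_right (by linarith : m - h ≤ s)]
    rcases le_total s (m + h) with h' | h'
    · rw [min_eq_left h', max_eq_right (by linarith)]
      ring
    · rw [min_eq_right h', max_eq_left (by linarith)]
      ring

lemma tent_eq_mul_max (i : DyadicIndex) (t : ℝ) :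
    tent i t = 2 ^ (i.1 + 1) *
      max 0 (1 / 2 ^ (i.1 + 1) - |t - (2 * i.2 + 1) / 2 ^ (i.1 + 1)|) := by
  have hpos : (0 : ℝ) < 2 ^ (i.1 + 1) := by positivity
  rw [mul_max_of_nonneg _ _ hpos.le, mul_zero, mul_sub, mul_one_div_cancel hpos.ne',
    ← abs_of_pos hpos, ← abs_mul, mul_sub, abs_of_pos hpos, mul_div_cancel₀ _ hpos.ne', tent]

lemma schauderCoeff_min (s : unitInterval) (i : DyadicIndex) :
    schauderCoeff (fun t => min (s : ℝ) t) (some i) = 1 / 2 ^ (i.1 + 2) * tent i s := by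
  have hleft : (i.2 : ℝ) / 2 ^ i.1 = (2 * i.2 + 1) / 2 ^ (i.1 + 1) - 1 / 2 ^ (i.1 + 1) := by
    rw [pow_succ]
    field_simp
    ring
  have hright : ((i.2 : ℝ) + 1) / 2 ^ i.1 =
      (2 * i.2 + 1) / 2 ^ (i.1 + 1) + 1 / 2 ^ (i.1 + 1) := by
    rw [pow_succ]
    field_simp
    ring
  rw [schauderCoeff_some, coe_gridPt i.two_mul_add_one_le, coe_gridPt i.2.2.le, coe_gridPt i.2.2]
  push_cast
  rw [hleft, hright, min_sub_average_min _ _ (by positivity), tent_eq_mul_max, pow_succ _ (i.1 + 1)]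
  field_simp

/-- The covariance kernel of Brownian motion. -/
abbrev wienerKernel (s t : unitInterval) : ℝ := min (s : ℝ) t

lemma kernelForm_comm {K : unitInterval → unitInterval → ℝ} (hK : ∀ s t, K s t = K t s)
    (L L' : unitInterval →₀ ℝ) : kernelForm K L L' = kernelForm K L' L := by
  simp only [kernelForm_apply, Finsupp.linearCombination_apply, Finsupp.sum, smul_eq_mul,
    Finset.mul_sum]
  rw [Finset.sum_comm]
  exact Finset.sum_congr rfl fun s _ => Finset.sum_congr rfl fun t _ => by rw [hK]; ring

lemma kernelForm_schauderFunctional (a : Option DyadicIndex) (i : DyadicIndex) :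
    kernelForm wienerKernel (schauderFunctional a) (schauderFunctional (some i)) =
      1 / 2 ^ (i.1 + 2) * schauderCoeff (fun s => tent i s) a := by
  have hmin : (fun s => Finsupp.linearCombination ℝ (wienerKernel s)
      (schauderFunctional (some i))) = fun s : unitInterval => 1 / 2 ^ (i.1 + 2) * tent i s :=
    funext fun s => schauderCoeff_min s i
  rw [kernelForm_apply, hmin, schauderCoeff]
  simp only [Finsupp.linearCombination_apply, Finsupp.sum, smul_eq_mul, Finset.mul_sum]
  exact Finset.sum_congr rfl fun s _ => by ring

lemma schauderCoeff_tent_eq_zero_of_lt {i i' : DyadicIndex} (h : i'.1 < i.1) :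
    schauderCoeff (fun s => tent i s) (some i') = 0 :=
  schauderCoeff_some_eq_zero (fun _ hm => tent_gridPt i hm) h

lemma schauderCoeff_tent_eq_zero_of_gt {i i' : DyadicIndex} (h : i.1 < i'.1) :
    schauderCoeff (fun s => tent i s) (some i') = 0 := by
  have hsymm := kernelForm_comm (K := wienerKernel) (fun _ _ => min_comm _ _)
    (schauderFunctional (some i')) (schauderFunctional (some i))
  rw [kernelForm_schauderFunctional, kernelForm_schauderFunctional,
    schauderCoeff_tent_eq_zero_of_lt h, mul_zero] at hsymm
  exact (mul_eq_zero.1 hsymm).resolve_left (by positivity)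

lemma schauderCoeff_tent_none (i : DyadicIndex) : schauderCoeff (fun s => tent i s) none = 0 := by
  rw [schauderCoeff_none, ← gridPt_self (by positivity : 2 ^ i.1 ≠ 0), tent_gridPt i le_rfl]

lemma schauderCoeff_tent_some (i i' : DyadicIndex) :
    schauderCoeff (fun s => tent i s) (some i') = if i' = i then 1 else 0 := by
  obtain ⟨k, j⟩ := i
  obtain ⟨k', j'⟩ := i'
  rcases lt_trichotomy k' k with h | rfl | h
  · rw [schauderCoeff_tent_eq_zero_of_lt h, if_neg (by simp [h.ne])]
  · rw [schauderCoeff_some, tent_gridPt ⟨k', j⟩ j'.2.le, tent_gridPt ⟨k', j⟩ j'.2,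
      tent_gridPt_midpoint ⟨k', j⟩ j'.2]
    simp [Fin.ext_iff]
  · rw [schauderCoeff_tent_eq_zero_of_gt h, if_neg (by simp [h.ne'])]

/-- The variances of the Faber–Schauder coefficients of Brownian motion. -/
def schauderVar : Option DyadicIndex → ℝ≥0
  | none => 1
  | some i => 1 / 2 ^ (i.1 + 2)

lemma schauderVar_ne_zero (a : Option DyadicIndex) : schauderVar a ≠ 0 := by
  cases a <;> simp [schauderVar]

lemma kernelForm_schauderFunctional_self (a : Option DyadicIndex) :
    kernelForm wienerKernel (schauderFunctional a) (schauderFunctional a) = schauderVar a := by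
  cases a with
  | none => simp [kernelForm_apply, schauderFunctional, schauderVar]
  | some i =>
    simp [kernelForm_schauderFunctional, schauderCoeff_tent_some, schauderVar]

lemma kernelForm_schauderFunctional_of_ne {a b : Option DyadicIndex} (hab : a ≠ b) :
    kernelForm wienerKernel (schauderFunctional a) (schauderFunctional b) = 0 := by
  have none_left : ∀ i, kernelForm wienerKernel (schauderFunctional none)
      (schauderFunctional (some i)) = 0 := fun i => by
    rw [kernelForm_schauderFunctional, schauderCoeff_tent_none, mul_zero]
  rcases a with _ | i <;> rcases b with _ | i'
  · exact absurd rfl hab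
  · exact none_left i'
  · rw [kernelForm_comm fun _ _ => min_comm _ _, none_left]
  · rw [kernelForm_schauderFunctional, schauderCoeff_tent_some,
      if_neg (fun h => hab (congrArg some h)), mul_zero]

lemma measurable_schauderCoeff (a : Option DyadicIndex) :
    Measurable fun ω : PathSpace => schauderCoeff ω.1 a :=
  (continuous_linearCombination_path _).measurable

lemma IsWienerMeasure.map_schauderCoeff {W : Measure PathSpace} (hW : IsWienerMeasure W)
    (a : Option DyadicIndex) :
    W.map (fun ω : PathSpace => schauderCoeff ω.1 a) = gaussianReal 0 (schauderVar a) := by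
  have hlaw := IsGaussianProcess.map_linearCombination hW (schauderFunctional a)
  rwa [kernelForm_schauderFunctional_self, Real.toNNReal_coe] at hlaw

lemma IsWienerMeasure.iIndepFun_schauderCoeff {W : Measure PathSpace} (hW : IsWienerMeasure W) :
    iIndepFun (fun a (ω : PathSpace) => schauderCoeff ω.1 a) W :=
  IsGaussianProcess.iIndepFun_linearCombination hW
    (fun a => (kernelForm_schauderFunctional_self a).symm ▸ NNReal.coe_nonneg _)
    fun _ _ => kernelForm_schauderFunctional_of_ne

/-! ### Paths with prescribed signs of their Schauder coefficients -/

/-- The sign `±1` encoded by a Boolean. -/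
def boolSign (b : Bool) : ℝ := if b then 1 else -1

lemma abs_boolSign (b : Bool) : |boolSign b| = 1 := by
  cases b <;> simp [boolSign]

lemma abs_boolSign_sub {a b : Bool} (hab : a ≠ b) : |boolSign a - boolSign b| = 2 := by
  cases a <;> cases b <;> simp_all [boolSign] <;> norm_num

/-- The sum of the tents of level `k`, with signs prescribed by `s`. -/
def tentLevel (s : DyadicIndex → Bool) (k : ℕ) (t : ℝ) : ℝ :=
  ∑ j, boolSign (s ⟨k, j⟩) * tent ⟨k, j⟩ t

lemma continuous_tentLevel (s : DyadicIndex → Bool) (k : ℕ) : Continuous (tentLevel s k) :=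
  continuous_finsetSum _ fun _ _ => continuous_const.mul (continuous_tent _)

lemma tent_eq_zero_of_ne {k : ℕ} {i j : Fin (2 ^ k)} (hij : i ≠ j) {t : ℝ}
    (hj : tent ⟨k, j⟩ t ≠ 0) : tent ⟨k, i⟩ t = 0 := by
  by_contra hi
  have hi' := lt_of_not_ge (mt tent_eq_zero_of_one_le hi)
  have hj' := lt_of_not_ge (mt tent_eq_zero_of_one_le hj)
  have hne : ((i : ℕ) : ℤ) - (j : ℕ) ≠ 0 := sub_ne_zero.2 (by exact_mod_cast Fin.val_ne_of_ne hij)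
  have hone : (1 : ℝ) ≤ |((i : ℕ) : ℝ) - (j : ℕ)| := by exact_mod_cast Int.one_le_abs hne
  rw [abs_lt] at hi' hj'
  rcases le_abs.1 hone with h | h <;> linarith [hi'.1, hi'.2, hj'.1, hj'.2]

lemma exists_forall_ne_tent_eq_zero (k : ℕ) (t : ℝ) :
    ∃ j : Fin (2 ^ k), ∀ i, i ≠ j → tent ⟨k, i⟩ t = 0 := by
  by_cases h : ∃ j : Fin (2 ^ k), tent ⟨k, j⟩ t ≠ 0
  · obtain ⟨j, hj⟩ := h
    exact ⟨j, fun i hij => tent_eq_zero_of_ne hij hj⟩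
  · push Not at h
    exact ⟨⟨0, by positivity⟩, fun i _ => h i⟩

lemma tentLevel_eq {k : ℕ} {j : Fin (2 ^ k)} {t : ℝ} (h : ∀ i, i ≠ j → tent ⟨k, i⟩ t = 0)
    (s : DyadicIndex → Bool) : tentLevel s k t = boolSign (s ⟨k, j⟩) * tent ⟨k, j⟩ t :=
  Fintype.sum_eq_single j fun i hi => by rw [h i hi, mul_zero]

lemma abs_tentLevel_le_one (s : DyadicIndex → Bool) (k : ℕ) (t : ℝ) : |tentLevel s k t| ≤ 1 := by
  obtain ⟨j, hj⟩ := exists_forall_ne_tent_eq_zero k t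
  rw [tentLevel_eq hj, abs_mul, abs_boolSign, one_mul, abs_of_nonneg (tent_nonneg _ _)]
  exact tent_le_one _ _

lemma abs_tentLevel_sub_le (s : DyadicIndex → Bool) (k : ℕ) (x y : ℝ) :
    |tentLevel s k x - tentLevel s k y| ≤ 2 ^ (k + 2) * |x - y| := by
  obtain ⟨i, hx⟩ := exists_forall_ne_tent_eq_zero k x
  obtain ⟨j, hy⟩ := exists_forall_ne_tent_eq_zero k y
  have hi := abs_tent_sub_le ⟨k, i⟩ x y
  have hj := abs_tent_sub_le ⟨k, j⟩ x y
  have hnonneg : 0 ≤ (2 : ℝ) ^ (k + 1) * |x - y| := by positivity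
  rw [tentLevel_eq hx, tentLevel_eq hy, pow_succ _ (k + 1)]
  rcases eq_or_ne i j with rfl | hij
  · rw [← mul_sub, abs_mul, abs_boolSign, one_mul]
    linarith
  · rw [hy i hij, sub_zero] at hi
    rw [hx j hij.symm, zero_sub, abs_neg] at hj
    refine (abs_sub _ _).trans ?_
    rw [abs_mul, abs_mul, abs_boolSign, abs_boolSign]
    linarith

lemma schauderCoeff_tentLevel_some (s : DyadicIndex → Bool) (k : ℕ) (i : DyadicIndex) :
    schauderCoeff (fun t => tentLevel s k t) (some i) = if i.1 = k then boolSign (s i) else 0 := by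
  have hlinear : schauderCoeff (fun t => tentLevel s k t) (some i) =
      ∑ j, boolSign (s ⟨k, j⟩) * schauderCoeff (fun t => tent ⟨k, j⟩ t) (some i) := by
    simp only [schauderCoeff, tentLevel, Finsupp.linearCombination_apply, Finsupp.sum, smul_eq_mul,
      Finset.mul_sum]
    rw [Finset.sum_comm]
    exact Finset.sum_congr rfl fun _ _ => Finset.sum_congr rfl fun _ _ => mul_left_comm _ _ _
  simp only [hlinear, schauderCoeff_tent_some]
  obtain ⟨m, l⟩ := i
  split_ifs with hm
  · obtain rfl : m = k := hm
    rw [Fintype.sum_eq_single l fun j hj => by simp [hj.symm]]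
    simp
  · refine Finset.sum_eq_zero fun j _ => ?_
    rw [if_neg fun h => hm (congrArg Sigma.fst h), mul_zero]

lemma schauderCoeff_tsum {u : ℕ → unitInterval → ℝ} (hu : ∀ t, Summable fun k => u k t)
    (a : Option DyadicIndex) :
    schauderCoeff (fun t => ∑' k, u k t) a = ∑' k, schauderCoeff (u k) a := by
  simp only [schauderCoeff, Finsupp.linearCombination_apply, Finsupp.sum, smul_eq_mul]
  rw [Summable.tsum_finsetSum fun t _ => (hu t).mul_left _]
  exact Finset.sum_congr rfl fun t _ => tsum_mul_left.symm

lemma two_rpow_neg_lt_one {q : ℝ} (hq : 0 < q) : (2 : ℝ) ^ (-q) < 1 :=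
  Real.rpow_lt_one_of_one_lt_of_neg one_lt_two (by linarith)

lemma two_rpow_pow_eq_rpow (a : ℝ) (k : ℕ) : ((2 : ℝ) ^ a) ^ k = ((2 : ℝ) ^ k) ^ a := by
  rw [← Real.rpow_mul_natCast two_pos.le, mul_comm, Real.rpow_natCast_mul two_pos.le]

lemma norm_pow_mul_tentLevel_le {r : ℝ} (hr : 0 ≤ r) (s : DyadicIndex → Bool) (k : ℕ) (t : ℝ) :
    ‖r ^ k * tentLevel s k t‖ ≤ r ^ k := by
  rw [norm_mul, Real.norm_of_nonneg (by positivity), Real.norm_eq_abs]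
  exact mul_le_of_le_one_right (by positivity) (abs_tentLevel_le_one s k t)

lemma summable_pow_mul_tentLevel {r : ℝ} (hr : 0 ≤ r) (hr1 : r < 1) (s : DyadicIndex → Bool)
    (t : ℝ) : Summable fun k => r ^ k * tentLevel s k t :=
  .of_norm_bounded (summable_geometric_of_lt_one hr hr1)
    fun k => norm_pow_mul_tentLevel_le hr s k t

/-- The critical paths: their Schauder coefficients of level `k` are `± 2 ^ (-q k)`, with signs
prescribed by `s`. -/
def critPath {q : ℝ} (hq : 0 < q) (s : DyadicIndex → Bool) : PathSpace where
  val :=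
    { toFun t := ∑' k, ((2 : ℝ) ^ (-q)) ^ k * tentLevel s k t
      continuous_toFun := continuous_tsum
        (fun k => continuous_const.mul ((continuous_tentLevel s k).comp continuous_subtype_val))
        (summable_geometric_of_lt_one (by positivity) (two_rpow_neg_lt_one hq))
        fun k t => norm_pow_mul_tentLevel_le (by positivity) s k t }
  property := by
    have hzero : ∀ k, tentLevel s k (0 : unitInterval) = 0 := fun k =>
      Finset.sum_eq_zero fun j _ => by
        rw [← gridPt_zero_right (2 ^ k), tent_gridPt ⟨k, j⟩ (Nat.zero_le _), mul_zero]
    simp only [ContinuousMap.coe_mk, hzero, mul_zero, tsum_zero]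

lemma critPath_apply {q : ℝ} (hq : 0 < q) (s : DyadicIndex → Bool) (t : unitInterval) :
    (critPath hq s).1 t = ∑' k, ((2 : ℝ) ^ (-q)) ^ k * tentLevel s k t :=
  rfl

lemma schauderCoeff_critPath {q : ℝ} (hq : 0 < q) (s : DyadicIndex → Bool)
    (a : Option DyadicIndex) : schauderCoeff (critPath hq s).1 a =
      ∑' k, ((2 : ℝ) ^ (-q)) ^ k * schauderCoeff (fun t => tentLevel s k t) a := by
  have hsum (t : unitInterval) := summable_pow_mul_tentLevel (r := (2 : ℝ) ^ (-q)) (by positivity)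
    (two_rpow_neg_lt_one hq) s t
  refine (schauderCoeff_tsum hsum a).trans (tsum_congr fun k => ?_)
  simp only [schauderCoeff, Finsupp.linearCombination_apply, Finsupp.sum, smul_eq_mul,
    Finset.mul_sum, mul_left_comm]

lemma schauderCoeff_critPath_some {q : ℝ} (hq : 0 < q) (s : DyadicIndex → Bool)
    (i : DyadicIndex) :
    schauderCoeff (critPath hq s).1 (some i) = ((2 : ℝ) ^ (-q)) ^ i.1 * boolSign (s i) := by
  rw [schauderCoeff_critPath, tsum_eq_single i.1]
  · rw [schauderCoeff_tentLevel_some, if_pos rfl]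
  · intro k hk
    rw [schauderCoeff_tentLevel_some, if_neg hk.symm, mul_zero]

/-! ### Hölder paths -/

/-- The paths that are `b`-Hölder with constant `C`. -/
def holderBall (b C : ℝ) : Set PathSpace :=
  {ω | ∀ x y : unitInterval, |ω.1 x - ω.1 y| ≤ C * |(x : ℝ) - y| ^ b}

lemma nonneg_of_mem_holderBall {b C : ℝ} {ω : PathSpace} (h : ω ∈ holderBall b C) : 0 ≤ C := by
  simpa using (abs_nonneg _).trans (h 1 0)

lemma abs_coe_sub_le_one (x y : unitInterval) : |(x : ℝ) - y| ≤ 1 := by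
  rw [abs_le]
  constructor <;> linarith [x.2.1, x.2.2, y.2.1, y.2.2]

lemma holderBall_anti {b b' : ℝ} (hb : 0 < b) (hbb' : b ≤ b') (C : ℝ) :
    holderBall b' C ⊆ holderBall b C := by
  intro ω h x y
  refine (h x y).trans (mul_le_mul_of_nonneg_left ?_ (nonneg_of_mem_holderBall h))
  exact Real.rpow_le_rpow_of_exponent_ge_of_imp (abs_nonneg _) (abs_coe_sub_le_one x y) hbb'
    fun _ h0 => absurd h0 (hb.trans_le hbb').ne'

lemma holderBall_subset_holderMinus (b C : ℝ) : holderBall b C ⊆ holderMinus b :=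
  fun _ h => mem_iInter₂.2 fun _ ha => ⟨C, holderBall_anti ha.1 ha.2.le C h⟩

lemma abs_schauderCoeff_some_le_of_mem_holderBall {b C : ℝ} (hb : 0 ≤ b) {ω : PathSpace}
    (h : ω ∈ holderBall b C) (i : DyadicIndex) :
    |schauderCoeff ω.1 (some i)| ≤ C * ((2 : ℝ) ^ (-b)) ^ i.1 := by
  have hC := nonneg_of_mem_holderBall h
  have hpow : ((2 : ℝ) ^ (-b)) ^ i.1 = (1 / 2 ^ i.1) ^ b := by
    rw [two_rpow_pow_eq_rpow, Real.rpow_neg (by positivity), one_div,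
      Real.inv_rpow (by positivity)]
  have hclose {x y : unitInterval} (hxy : |(x : ℝ) - y| ≤ 1 / 2 ^ i.1) :
      |ω.1 x - ω.1 y| ≤ C * ((2 : ℝ) ^ (-b)) ^ i.1 := by
    refine (h x y).trans ?_
    rw [hpow]
    gcongr
  have hmid := coe_gridPt i.two_mul_add_one_le
  have hl := hclose (x := gridPt (2 ^ (i.1 + 1)) (2 * i.2 + 1)) (y := gridPt (2 ^ i.1) i.2) (by
    rw [hmid, coe_gridPt i.2.2.le, pow_succ, abs_le]
    push_cast
    constructor <;> field_simp <;> linarith)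
  have hr := hclose (x := gridPt (2 ^ (i.1 + 1)) (2 * i.2 + 1)) (y := gridPt (2 ^ i.1) (i.2 + 1))
    (by
      rw [hmid, coe_gridPt i.2.2, pow_succ, abs_le]
      push_cast
      constructor <;> field_simp <;> linarith)
  rw [schauderCoeff_some]
  rw [abs_le] at *
  constructor <;> linarith [hl.1, hl.2, hr.1, hr.2]

lemma norm_sum_pow_mul_le {r B d : ℝ} (hr : 1 / 2 < r) (hB : 0 ≤ B) (hd : 0 ≤ d) {u : ℕ → ℝ}
    (hu : ∀ k, |u k| ≤ B * 2 ^ k * d) {K : ℕ} (hK : 2 ^ K * d ≤ 1) :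
    ‖∑ k ∈ Finset.range K, r ^ k * u k‖ ≤ B / (2 * r - 1) * r ^ K := by
  have : 0 < r := by linarith
  have h2r : 0 < 2 * r - 1 := by linarith
  calc ‖∑ k ∈ Finset.range K, r ^ k * u k‖
      ≤ ∑ k ∈ Finset.range K, B * d * (2 * r) ^ k := norm_sum_le_of_le _ fun k _ => by
        rw [norm_mul, Real.norm_of_nonneg (by positivity), Real.norm_eq_abs, mul_pow]
        exact (mul_le_mul_of_nonneg_left (hu k) (by positivity)).trans_eq (by ring)
    _ = B * d * (((2 * r) ^ K - 1) / (2 * r - 1)) := by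
        rw [← Finset.mul_sum, geom_sum_eq (by linarith)]
    _ ≤ B * d * ((2 * r) ^ K / (2 * r - 1)) := by
        gcongr
        linarith
    _ = B / (2 * r - 1) * r ^ K * (2 ^ K * d) := by
        rw [mul_pow]
        ring
    _ ≤ B / (2 * r - 1) * r ^ K := mul_le_of_le_one_right (by positivity) hK

lemma norm_tsum_pow_add_mul_le {r A : ℝ} (hr0 : 0 ≤ r) (hr1 : r < 1) {u : ℕ → ℝ}
    (hu : ∀ k, |u k| ≤ A) (K : ℕ) :
    ‖∑' k, r ^ (k + K) * u (k + K)‖ ≤ A / (1 - r) * r ^ K := by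
  have hgeom := (hasSum_geometric_of_lt_one hr0 hr1).mul_left (A * r ^ K)
  refine (tsum_of_norm_bounded hgeom fun k => ?_).trans_eq (by ring)
  rw [norm_mul, Real.norm_of_nonneg (by positivity), Real.norm_eq_abs]
  exact (mul_le_mul_of_nonneg_left (hu _) (by positivity)).trans_eq (by ring)

/-- Splitting at level `K` with `2 ^ K ≈ d⁻¹`, the Lipschitz bound controls the coarse levels and
the uniform bound the fine ones. -/
lemma abs_critPath_sub_le {q : ℝ} (hq : 0 < q) (hq1 : q < 1) (s : DyadicIndex → Bool)
    {x y : unitInterval} {K : ℕ} (hK : 2 ^ K * |(x : ℝ) - y| ≤ 1) :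
    |(critPath hq s).1 x - (critPath hq s).1 y| ≤
      (4 / (2 * 2 ^ (-q) - 1) + 2 / (1 - 2 ^ (-q))) * ((2 : ℝ) ^ (-q)) ^ K := by
  set r : ℝ := 2 ^ (-q) with hr
  have hr0 : 0 ≤ r := by positivity
  have hr1 : r < 1 := two_rpow_neg_lt_one hq
  have hr2 : 1 / 2 < r := by
    rw [hr, one_div, ← Real.rpow_neg_one]
    exact Real.rpow_lt_rpow_of_exponent_lt one_lt_two (by linarith)
  have hx := summable_pow_mul_tentLevel hr0 hr1 s x
  have hy := summable_pow_mul_tentLevel hr0 hr1 s y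
  have hsub : (critPath hq s).1 x - (critPath hq s).1 y =
      ∑' k, r ^ k * (tentLevel s k x - tentLevel s k y) := by
    simp only [critPath_apply, ← hr, mul_sub]
    exact (hx.tsum_sub hy).symm
  have hsum : Summable fun k => r ^ k * (tentLevel s k x - tentLevel s k y) := by
    simpa only [mul_sub] using hx.sub hy
  rw [hsub, ← hsum.sum_add_tsum_nat_add K, add_mul]
  refine (norm_add_le _ _).trans (add_le_add
    (norm_sum_pow_mul_le (u := fun k => tentLevel s k x - tentLevel s k y) hr2 zero_le_four
      (abs_nonneg _) (fun k => ?_) hK)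
    (norm_tsum_pow_add_mul_le (u := fun k => tentLevel s k x - tentLevel s k y) hr0 hr1
      (fun k => ?_) K))
  · exact (abs_tentLevel_sub_le s k x y).trans_eq (by rw [pow_add]; ring)
  · refine (abs_sub _ _).trans ?_
    linarith [abs_tentLevel_le_one s k x, abs_tentLevel_le_one s k y]

lemma exists_critPath_mem_holderBall {q : ℝ} (hq : 0 < q) (hq1 : q < 1)
    (s : DyadicIndex → Bool) : ∃ C, critPath hq s ∈ holderBall q C := by
  refine ⟨(4 / (2 * 2 ^ (-q) - 1) + 2 / (1 - 2 ^ (-q))) * 2 ^ q, fun x y => ?_⟩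
  rcases (abs_nonneg ((x : ℝ) - y)).eq_or_lt with h0 | hpos
  · obtain rfl : x = y := Subtype.ext (sub_eq_zero.1 (abs_eq_zero.1 h0.symm))
    simp [Real.zero_rpow hq.ne']
  obtain ⟨K, hK, hK'⟩ := exists_nat_pow_near (one_le_inv_iff₀.2 ⟨hpos, abs_coe_sub_le_one x y⟩)
    one_lt_two
  have hle : 2 ^ K * |(x : ℝ) - y| ≤ 1 := by
    rwa [← le_inv_mul_iff₀' hpos, mul_one]
  have hpow : ((2 : ℝ) ^ (-q)) ^ K ≤ 2 ^ q * |(x : ℝ) - y| ^ q := by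
    rw [two_rpow_pow_eq_rpow, Real.rpow_neg (by positivity), ← Real.inv_rpow (by positivity),
      ← Real.mul_rpow (by positivity) (by positivity)]
    refine Real.rpow_le_rpow (by positivity) ?_ hq.le
    rw [inv_lt_iff_one_lt_mul₀ hpos, pow_succ] at hK'
    rw [inv_le_iff_one_le_mul₀ (by positivity)]
    linarith
  have hbound := abs_critPath_sub_le hq hq1 s hle
  have hnonneg := nonneg_of_mul_nonneg_left ((abs_nonneg _).trans hbound) (by positivity)
  exact hbound.trans ((mul_le_mul_of_nonneg_left hpow hnonneg).trans_eq (mul_assoc _ _ _).symm)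

/-! ### Orey exponents -/

lemma abs_sub_gridPt_succ_le {b C : ℝ} {ω : PathSpace} (h : ω ∈ holderBall b C) {n i : ℕ}
    (hi : i < n) : |ω.1 (gridPt n (i + 1)) - ω.1 (gridPt n i)| ≤ C * (n : ℝ) ^ (-b) := by
  have hn : (0 : ℝ) < n := by exact_mod_cast i.zero_le.trans_lt hi
  have hmesh : (gridPt n (i + 1) : ℝ) - gridPt n i = (n : ℝ)⁻¹ := by
    rw [coe_gridPt hi.le, coe_gridPt hi]
    push_cast
    ring
  refine (h _ _).trans_eq ?_
  rw [hmesh, abs_of_pos (by positivity), Real.inv_rpow hn.le, Real.rpow_neg hn.le]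

lemma Qvar_le_of_mem_holderBall {b C : ℝ} {ω : PathSpace} (h : ω ∈ holderBall b C) (n : ℕ) :
    Qvar ω n ≤ C * (n : ℝ) ^ (-b) := by
  have hC := nonneg_of_mem_holderBall h
  rcases n.eq_zero_or_pos with rfl | hn
  · simp only [Qvar, Finset.range_zero, Finset.sum_empty, mul_zero, Real.sqrt_zero]
    positivity
  have hn' : (0 : ℝ) < n := by exact_mod_cast hn
  rw [Qvar, Real.sqrt_le_left (by positivity), one_div, inv_mul_le_iff₀ hn']
  calc ∑ i ∈ Finset.range n, (ω.1 (gridPt n (i + 1)) - ω.1 (gridPt n i)) ^ 2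
      ≤ ∑ i ∈ Finset.range n, (C * (n : ℝ) ^ (-b)) ^ 2 := Finset.sum_le_sum fun i hi => by
        rw [← sq_abs]
        exact pow_le_pow_left₀ (abs_nonneg _)
          (abs_sub_gridPt_succ_le h (Finset.mem_range.1 hi)) 2
    _ = n * (C * (n : ℝ) ^ (-b)) ^ 2 := by simp

/-- The variation of `ω` along the grid of mesh `1 / n`, up to the grid point `a / n`. -/
def gridVariation (ω : PathSpace) (n a : ℕ) : ℝ :=
  ∑ i ∈ Finset.range a, |ω.1 (gridPt n (i + 1)) - ω.1 (gridPt n i)|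

lemma abs_sub_le_gridVariation_sub (ω : PathSpace) (n : ℕ) {a b : ℕ} (h : a ≤ b) :
    |ω.1 (gridPt n b) - ω.1 (gridPt n a)| ≤ gridVariation ω n b - gridVariation ω n a := by
  rw [gridVariation, gridVariation, ← Finset.sum_Ico_eq_sub _ h,
    ← Finset.sum_Ico_sub (fun i => ω.1 (gridPt n i)) h]
  exact Finset.abs_sum_le_sum_abs _ _

lemma gridVariation_self_div_le_Qvar (ω : PathSpace) (n : ℕ) :
    gridVariation ω n n / n ≤ Qvar ω n := by
  rcases n.eq_zero_or_pos with rfl | hn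
  · simp [Qvar]
  have hcauchy := sq_sum_le_card_mul_sum_sq (s := Finset.range n)
    (f := fun i => |ω.1 (gridPt n (i + 1)) - ω.1 (gridPt n i)|)
  simp only [Finset.card_range, sq_abs] at hcauchy
  refine Real.le_sqrt_of_sq_le ?_
  rw [div_pow, div_le_iff₀ (by positivity)]
  exact hcauchy.trans_eq (by field_simp)

lemma mul_div_two_pow_le {n k j : ℕ} (hj : j ≤ 2 ^ k) : j * n / 2 ^ k ≤ n :=
  Nat.div_le_of_le_mul (Nat.mul_le_mul_right n hj)

lemma abs_gridPt_sub_gridPt_two_pow_le {n k j : ℕ} (hn : 0 < n) (hj : j ≤ 2 ^ k) :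
    |(gridPt n (j * n / 2 ^ k) : ℝ) - gridPt (2 ^ k) j| ≤ (n : ℝ)⁻¹ := by
  have hn' : (0 : ℝ) < n := by exact_mod_cast hn
  have hle : ((j * n / 2 ^ k : ℕ) : ℝ) * 2 ^ k ≤ j * n := by
    exact_mod_cast Nat.div_mul_le_self _ _
  have hlt : (j : ℝ) * n ≤ ((j * n / 2 ^ k : ℕ) + 1) * 2 ^ k := by
    rw [mul_comm _ ((2 : ℝ) ^ k)]
    exact_mod_cast (Nat.lt_mul_div_succ (j * n) (by positivity)).le
  rw [coe_gridPt (mul_div_two_pow_le hj), coe_gridPt hj]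
  push_cast
  rw [← div_le_div_iff₀ hn' (by positivity)] at hle
  rw [← div_le_div_iff₀ (by positivity) hn', add_div] at hlt
  rw [abs_le]
  constructor <;> linarith [one_div (n : ℝ), inv_pos.2 hn']

lemma abs_sub_round_le {b C : ℝ} (hb : 0 ≤ b) {ω : PathSpace} (h : ω ∈ holderBall b C)
    {n k j : ℕ} (hn : 0 < n) (hj : j ≤ 2 ^ k) :
    |ω.1 (gridPt n (j * n / 2 ^ k)) - ω.1 (gridPt (2 ^ k) j)| ≤ C * (n : ℝ) ^ (-b) := by
  have hC := nonneg_of_mem_holderBall h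
  refine (h _ _).trans ?_
  rw [Real.rpow_neg (Nat.cast_nonneg n), ← Real.inv_rpow (Nat.cast_nonneg n)]
  gcongr
  exact abs_gridPt_sub_gridPt_two_pow_le hn hj

lemma le_gridVariation_sub {b C a : ℝ} (hb : 0 ≤ b) {ω : PathSpace} (h : ω ∈ holderBall b C)
    {n : ℕ} (hn : 0 < n) {i : DyadicIndex} (hi : a ≤ |schauderCoeff ω.1 (some i)|)
    (ha : 4 * (C * (n : ℝ) ^ (-b)) ≤ a) :
    a ≤ gridVariation ω n ((i.2 + 1) * n / 2 ^ i.1) - gridVariation ω n (i.2 * n / 2 ^ i.1) := by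
  have hleft : i.2 * n / 2 ^ i.1 ≤ (2 * i.2 + 1) * n / 2 ^ (i.1 + 1) := by
    rw [Nat.le_div_iff_mul_le (by positivity), pow_succ]
    linarith [Nat.div_mul_le_self (i.2 * n) (2 ^ i.1)]
  have hright : (2 * i.2 + 1) * n / 2 ^ (i.1 + 1) ≤ (i.2 + 1) * n / 2 ^ i.1 := by
    rw [Nat.le_div_iff_mul_le (by positivity)]
    have := Nat.div_mul_le_self ((2 * i.2 + 1) * n) (2 ^ (i.1 + 1))
    rw [pow_succ] at this ⊢
    linarith
  have hl := abs_sub_round_le hb h hn i.2.2.le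
  have hm := abs_sub_round_le hb h hn i.two_mul_add_one_le
  have hr := abs_sub_round_le hb h hn i.2.2
  have hvl := abs_sub_le_gridVariation_sub ω n hleft
  have hvr := abs_sub_le_gridVariation_sub ω n hright
  rw [schauderCoeff_some] at hi
  rw [abs_le] at hl hm hr hvl hvr
  rcases le_abs.1 hi with hi | hi <;>
    linarith [hl.1, hl.2, hm.1, hm.2, hr.1, hr.2, hvl.1, hvl.2, hvr.1, hvr.2]

lemma two_pow_mul_div_le_Qvar {b C a : ℝ} (hb : 0 ≤ b) {ω : PathSpace} (h : ω ∈ holderBall b C)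
    {n k : ℕ} (hn : 0 < n) (hk : ∀ j, a ≤ |schauderCoeff ω.1 (some ⟨k, j⟩)|)
    (ha : 4 * (C * (n : ℝ) ^ (-b)) ≤ a) : 2 ^ k * a / n ≤ Qvar ω n := by
  have hsum : ∀ j ≤ 2 ^ k, j * a ≤ gridVariation ω n (j * n / 2 ^ k) := by
    intro j
    induction j with
    | zero => simp [gridVariation]
    | succ j ih =>
      intro hj
      have hstep := le_gridVariation_sub hb h hn (hk ⟨j, hj⟩) ha
      push_cast
      linarith [ih (by lia)]
  refine (div_le_div_of_nonneg_right ?_ n.cast_nonneg).trans (gridVariation_self_div_le_Qvar ω n)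
  simpa [Nat.mul_div_cancel_left _ (Nat.two_pow_pos k)] using hsum (2 ^ k) le_rfl

lemma pos_of_critPath_mem_holderBall {q C : ℝ} (hq : 0 < q) {s : DyadicIndex → Bool}
    (h : critPath hq s ∈ holderBall q C) : 0 < C := by
  have hle := abs_schauderCoeff_some_le_of_mem_holderBall hq.le h ⟨0, 0⟩
  rw [schauderCoeff_critPath_some, abs_mul, abs_boolSign, pow_zero, abs_one, mul_one,
    mul_one] at hle
  linarith

/-- Apply `two_pow_mul_div_le_Qvar` at the finest level `k` with `2 ^ k ≤ (4 C) ^ (-1 / q) n`. -/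
lemma exists_le_Qvar_critPath {q : ℝ} (hq : 0 < q) (hq1 : q < 1) (s : DyadicIndex → Bool) :
    ∃ c > 0, ∀ᶠ n : ℕ in atTop, c * (n : ℝ) ^ (-q) ≤ Qvar (critPath hq s) n := by
  obtain ⟨C, hC⟩ := exists_critPath_mem_holderBall hq hq1 s
  have hcoeff (k : ℕ) (j : Fin (2 ^ k)) :
      ((2 : ℝ) ^ k) ^ (-q) ≤ |schauderCoeff (critPath hq s).1 (some ⟨k, j⟩)| := by
    rw [schauderCoeff_critPath_some, abs_mul, abs_boolSign, mul_one, abs_of_pos (by positivity),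
      two_rpow_pow_eq_rpow]
  have hC0 := pos_of_critPath_mem_holderBall hq hC
  set γ : ℝ := (4 * C) ^ (-q⁻¹) with hγ
  have hγ0 : 0 < γ := by positivity
  refine ⟨(γ / 2) ^ (1 - q), by positivity, ?_⟩
  filter_upwards [eventually_gt_atTop 0,
    tendsto_natCast_atTop_atTop.eventually_ge_atTop γ⁻¹] with n hn hnγ
  have hn' : (0 : ℝ) < n := by exact_mod_cast hn
  obtain ⟨k, hk, hk'⟩ := exists_nat_pow_near ((inv_le_iff_one_le_mul₀' hγ0).1 hnγ) one_lt_two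
  have hγq : (γ * n) ^ (-q) = 4 * (C * (n : ℝ) ^ (-q)) := by
    rw [Real.mul_rpow hγ0.le hn'.le, hγ, ← Real.rpow_mul (by positivity), neg_mul_neg,
      inv_mul_cancel₀ hq.ne', Real.rpow_one, mul_assoc]
  have hfine : 4 * (C * (n : ℝ) ^ (-q)) ≤ ((2 : ℝ) ^ k) ^ (-q) := by
    rw [← hγq]
    exact Real.rpow_le_rpow_of_nonpos (by positivity) hk (by linarith)
  refine le_trans ?_ (two_pow_mul_div_le_Qvar hq.le hC hn (hcoeff k) hfine)
  calc (γ / 2) ^ (1 - q) * (n : ℝ) ^ (-q) = (γ * n / 2) ^ (1 - q) / n := by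
        rw [mul_div_right_comm, Real.mul_rpow (by positivity) hn'.le, Real.rpow_sub hn' 1 q,
          Real.rpow_one, Real.rpow_neg hn'.le]
        field_simp
    _ ≤ ((2 : ℝ) ^ k) ^ (1 - q) / n := by
        rw [pow_succ] at hk'
        gcongr
        linarith
    _ = 2 ^ k * ((2 : ℝ) ^ k) ^ (-q) / n := by
        rw [sub_eq_add_neg, Real.rpow_add (by positivity), Real.rpow_one]

lemma tendsto_neg_log_div_log {Q : ℕ → ℝ} {q c C : ℝ} (hc : 0 < c) (hC : 0 < C)
    (hlow : ∀ᶠ n : ℕ in atTop, c * (n : ℝ) ^ (-q) ≤ Q n)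
    (hup : ∀ᶠ n : ℕ in atTop, Q n ≤ C * (n : ℝ) ^ (-q)) :
    Tendsto (fun n : ℕ => -Real.log (Q n) / Real.log n) atTop (𝓝 q) := by
  have hlog : Tendsto (fun n : ℕ => Real.log n) atTop atTop :=
    Real.tendsto_log_atTop.comp tendsto_natCast_atTop_atTop
  have hlim (a : ℝ) : Tendsto (fun n : ℕ => q - a / Real.log n) atTop (𝓝 q) := by
    simpa using (tendsto_const_nhds (x := q)).sub (hlog.const_div_atTop a)
  have hlogrpow {a : ℝ} (ha : 0 < a) {n : ℕ} (hn : (0 : ℝ) < n) :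
      Real.log (a * (n : ℝ) ^ (-q)) = Real.log a - q * Real.log n := by
    rw [Real.log_mul ha.ne' (by positivity), Real.log_rpow hn, neg_mul, sub_eq_add_neg]
  refine tendsto_of_tendsto_of_tendsto_of_le_of_le' (hlim (Real.log C)) (hlim (Real.log c)) ?_ ?_
  · filter_upwards [hlow, hup, hlog.eventually_gt_atTop 0, eventually_gt_atTop 0]
      with n hlow hup hlogn hn
    have hn' : (0 : ℝ) < n := by exact_mod_cast hn
    have hle := Real.log_le_log (lt_of_lt_of_le (by positivity) hlow) hup
    rw [hlogrpow hC hn'] at hle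
    rw [le_div_iff₀ hlogn, sub_mul, div_mul_cancel₀ _ hlogn.ne']
    linarith
  · filter_upwards [hlow, hlog.eventually_gt_atTop 0, eventually_gt_atTop 0] with n hlow hlogn hn
    have hn' : (0 : ℝ) < n := by exact_mod_cast hn
    have hle := Real.log_le_log (by positivity) hlow
    rw [hlogrpow hc hn'] at hle
    rw [div_le_iff₀ hlogn, sub_mul, div_mul_cancel₀ _ hlogn.ne']
    linarith

lemma critPath_mem_holderCrit {q : ℝ} (hq : 0 < q) (hq1 : q < 1) (s : DyadicIndex → Bool) :
    critPath hq s ∈ holderCrit q := by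
  obtain ⟨C, hC⟩ := exists_critPath_mem_holderBall hq hq1 s
  obtain ⟨c, hc, hlow⟩ := exists_le_Qvar_critPath hq hq1 s
  have hlim := tendsto_neg_log_div_log hc (pos_of_critPath_mem_holderBall hq hC) hlow
    (.of_forall (Qvar_le_of_mem_holderBall hC))
  have hlimE := (continuous_coe_real_ereal.tendsto q).comp hlim
  exact ⟨holderBall_subset_holderMinus q C hC, hlimE.liminf_eq, hlimE.limsup_eq⟩

/-! ### Local orders -/

lemma le_log_neg_log_div {m ε η : ℝ} (hε : ε ∈ Ioo 0 1) (hm : 0 < m)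
    (h : m ≤ Real.exp (-(ε ^ (-η)))) : η ≤ Real.log (-Real.log m) / -Real.log ε := by
  have hrpow : ε ^ (-η) ≤ -Real.log m := by linarith [(Real.log_le_iff_le_exp hm).2 h]
  have hlog := Real.log_le_log (Real.rpow_pos_of_pos hε.1 _) hrpow
  rw [Real.log_rpow hε.1] at hlog
  rw [le_div_iff₀ (by linarith [Real.log_neg hε.1 hε.2])]
  linarith

lemma log_neg_log_div_le {m ε η : ℝ} (hη : 0 ≤ η) (hε : ε ∈ Ioo 0 1) (hm : m ≤ 1)
    (h : Real.exp (-(ε ^ (-η))) ≤ m) : Real.log (-Real.log m) / -Real.log ε ≤ η := by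
  have hm0 : 0 < m := (Real.exp_pos _).trans_le h
  have hlogε : 0 < -Real.log ε := by linarith [Real.log_neg hε.1 hε.2]
  have hrpow : -Real.log m ≤ ε ^ (-η) := by linarith [(Real.le_log_iff_exp_le hm0).2 h]
  rw [div_le_iff₀ hlogε]
  rcases (Real.log_nonpos hm0.le hm).eq_or_lt with hlogm | hlogm
  · rw [hlogm, neg_zero, Real.log_zero]
    positivity
  · have hlog := Real.log_le_log (by linarith) hrpow
    rw [Real.log_rpow hε.1] at hlog
    linarith

lemma le_lowerLocOrd {μ : Measure PathSpace} {ω : PathSpace} {η : ℝ}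
    (hpos : ∀ᶠ ε in 𝓝[>] (0 : ℝ), 0 < μ.real (ball ω ε))
    (h : ∀ᶠ ε in 𝓝[>] (0 : ℝ), μ.real (ball ω ε) ≤ Real.exp (-(ε ^ (-η)))) :
    (η : EReal) ≤ lowerLocOrd μ ω := by
  refine le_liminf_of_le (by isBoundedDefault) ?_
  filter_upwards [hpos, h, Ioo_mem_nhdsGT one_pos] with ε hpos h hε
  exact EReal.coe_le_coe_iff.2 (le_log_neg_log_div hε hpos h)

lemma upperLocOrd_le {μ : Measure PathSpace} [IsProbabilityMeasure μ] {ω : PathSpace} {η : ℝ}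
    (hη : 0 ≤ η)
    (h : ∀ᶠ ε in 𝓝[>] (0 : ℝ), Real.exp (-(ε ^ (-η))) ≤ μ.real (ball ω ε)) :
    upperLocOrd μ ω ≤ (η : EReal) := by
  refine limsup_le_of_le (by isBoundedDefault) ?_
  filter_upwards [h, Ioo_mem_nhdsGT one_pos] with ε h hε
  exact EReal.coe_le_coe_iff.2 (log_neg_log_div_le hη hε measureReal_le_one h)

/-- A null ball contributes the junk value `log (-log 0) = 0` to the local order, so a positive
lower local order excludes null balls. -/
lemma eventually_measureReal_ball_pos {μ : Measure PathSpace} {ω : PathSpace}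
    (h : 0 < lowerLocOrd μ ω) : ∀ᶠ ε in 𝓝[>] (0 : ℝ), 0 < μ.real (ball ω ε) := by
  by_contra hnull
  rw [not_eventually] at hnull
  refine absurd h (not_lt.2 (liminf_le_of_frequently_le' (hnull.mono fun ε hε => ?_)))
  have hzero : (μ (ball ω ε)).toReal = 0 := le_antisymm (not_lt.1 hε) ENNReal.toReal_nonneg
  simp [hzero]

lemma mem_levelOrd {μ : Measure PathSpace} [IsProbabilityMeasure μ] {ω : PathSpace} {ξ : ℝ}
    (hξ : 0 < ξ)
    (hup : ∀ η ∈ Ioo 0 ξ, ∀ᶠ ε in 𝓝[>] (0 : ℝ), μ.real (ball ω ε) ≤ Real.exp (-(ε ^ (-η))))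
    (hlow : ∀ η > ξ, ∀ᶠ ε in 𝓝[>] (0 : ℝ), Real.exp (-(ε ^ (-η))) ≤ μ.real (ball ω ε)) :
    ω ∈ levelOrd μ ξ := by
  have hpos : ∀ᶠ ε in 𝓝[>] (0 : ℝ), 0 < μ.real (ball ω ε) :=
    (hlow (ξ + 1) (by linarith)).mono fun ε h => (Real.exp_pos _).trans_le h
  have hlower : (ξ : EReal) ≤ lowerLocOrd μ ω := by
    refine le_of_forall_lt fun c hc => ?_
    obtain ⟨η, hcη, hηξ⟩ := EReal.lt_iff_exists_real_btwn.1 (max_lt hc (EReal.coe_pos.2 hξ))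
    obtain ⟨hcη, h0η⟩ := max_lt_iff.1 hcη
    exact hcη.trans_le (le_lowerLocOrd hpos
      (hup η ⟨EReal.coe_pos.1 h0η, EReal.coe_lt_coe_iff.1 hηξ⟩))
  have hupper : upperLocOrd μ ω ≤ (ξ : EReal) := by
    refine le_of_forall_gt fun c hc => ?_
    obtain ⟨η, hξη, hηc⟩ := EReal.lt_iff_exists_real_btwn.1 hc
    have hξη' := EReal.coe_lt_coe_iff.1 hξη
    exact (upperLocOrd_le (hξ.trans hξη').le (hlow η hξη')).trans_lt hηc
  have hle : lowerLocOrd μ ω ≤ upperLocOrd μ ω := liminf_le_limsup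
  exact ⟨le_antisymm (hle.trans hupper) hlower, le_antisymm hupper (hlower.trans hle)⟩

lemma le_of_mem_levelOrd {μ : Measure PathSpace} {ω : PathSpace} {ξ η : ℝ} (hξ : 0 < ξ)
    (hω : ω ∈ levelOrd μ ξ)
    (h : ∀ᶠ ε in 𝓝[>] (0 : ℝ), μ.real (ball ω ε) ≤ Real.exp (-(ε ^ (-η)))) : η ≤ ξ := by
  have hpos : 0 < lowerLocOrd μ ω := hω.1.symm ▸ EReal.coe_pos.2 hξ
  exact EReal.coe_le_coe_iff.1
    (hω.1 ▸ le_lowerLocOrd (eventually_measureReal_ball_pos hpos) h)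

lemma eventually_rpow_neg_le {c a b : ℝ} (hc : 0 < c) (hab : a < b) :
    ∀ᶠ ε in 𝓝[>] (0 : ℝ), ε ^ (-a) ≤ c * ε ^ (-b) := by
  have hlim : Tendsto (fun ε : ℝ => ε ^ (b - a)) (𝓝[>] 0) (𝓝 0) := by
    have hcont := (Real.continuousAt_rpow_const 0 (b - a) (Or.inr (by linarith))).tendsto
    rw [Real.zero_rpow (by linarith)] at hcont
    exact hcont.mono_left nhdsWithin_le_nhds
  filter_upwards [hlim.eventually_le_const hc, self_mem_nhdsWithin] with ε hle hε
  calc ε ^ (-a) = ε ^ (b - a) * ε ^ (-b) := by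
        rw [← Real.rpow_add hε]
        ring_nf
    _ ≤ c * ε ^ (-b) := mul_le_mul_of_nonneg_right hle (Real.rpow_nonneg (le_of_lt hε) _)

/-! ### Upper bounds for the Wiener measure of balls -/

lemma abs_apply_sub_le_dist (ω ω' : PathSpace) (t : unitInterval) :
    |ω.1 t - ω'.1 t| ≤ dist ω ω' := by
  rw [← Real.dist_eq]
  exact ContinuousMap.dist_apply_le_dist t

lemma measureReal_setOf_forall_mem {Ω ι : Type*} [MeasurableSpace Ω] {μ : Measure Ω}
    {X : ι → Ω → ℝ} (hX : iIndepFun X μ) (hmeas : ∀ i, Measurable (X i)) {S : ι → Set ℝ}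
    (hS : ∀ i, MeasurableSet (S i)) (s : Finset ι) :
    μ.real {ω | ∀ i ∈ s, X i ω ∈ S i} = ∏ i ∈ s, (μ.map (X i)).real (S i) := by
  have hinter : {ω | ∀ i ∈ s, X i ω ∈ S i} = ⋂ i ∈ s, X i ⁻¹' S i := by
    ext
    simp
  rw [hinter, measureReal_def, hX.measure_inter_preimage_eq_mul _ fun i _ => hS i,
    ENNReal.toReal_prod]
  exact Finset.prod_congr rfl fun i _ => (map_measureReal_apply (hmeas i) (hS i)).symm

/-- Each of the `2 ^ k` independent Schauder coefficients of level `k` is confined by the ball to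
an interval of probability at most `1 / 2`. -/
lemma IsWienerMeasure.ball_le_half_pow {W : Measure PathSpace} (hW : IsWienerMeasure W)
    (ω : PathSpace) {ε : ℝ} (hε : 0 ≤ ε) {k : ℕ} (hk : 64 * ε ^ 2 * 2 ^ k ≤ 1) :
    W.real (ball ω ε) ≤ (1 / 2) ^ 2 ^ k := by
  have := hW.1
  let c (j : Fin (2 ^ k)) : ℝ := schauderCoeff ω.1 (some ⟨k, j⟩)
  have hsub : ball ω ε ⊆ {ω' | ∀ j ∈ Finset.univ,
      schauderCoeff ω'.1 (some ⟨k, j⟩) ∈ Icc (c j - 2 * ε) (c j + 2 * ε)} := by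
    intro ω' hω' j _
    have hle := abs_schauderCoeff_some_le
      (fun t => (abs_apply_sub_le_dist ω' ω t).trans (mem_ball.1 hω').le) ⟨k, j⟩
    rw [schauderCoeff_sub, abs_le] at hle
    constructor <;> linarith [hle.1, hle.2]
  have hwide : 8 * ε ≤ √(2 * Real.pi * (1 / 2 ^ (k + 2))) := by
    refine Real.le_sqrt_of_sq_le ?_
    rw [pow_add, mul_one_div, le_div_iff₀ (by positivity)]
    nlinarith [Real.pi_gt_three]
  have hinj : Function.Injective fun j : Fin (2 ^ k) => (some ⟨k, j⟩ : Option DyadicIndex) :=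
    fun i j hij => by simpa using hij
  refine (measureReal_mono hsub).trans ?_
  rw [measureReal_setOf_forall_mem (hW.iIndepFun_schauderCoeff.precomp hinj)
    (fun j => measurable_schauderCoeff _) (fun j => measurableSet_Icc)]
  refine (Finset.prod_le_prod (g := fun _ => (1 / 2 : ℝ)) (fun j _ => measureReal_nonneg)
    fun j _ => ?_).trans_eq (by simp)
  rw [hW.map_schauderCoeff]
  refine (gaussianReal_Icc_le _ (schauderVar_ne_zero _) (by linarith)).trans ?_
  simp only [schauderVar, NNReal.coe_div, NNReal.coe_one, NNReal.coe_pow, NNReal.coe_ofNat]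
  rw [← div_eq_mul_inv, div_le_iff₀ (by positivity)]
  linarith

lemma IsWienerMeasure.eventually_ball_le_of_lt_two {W : Measure PathSpace}
    (hW : IsWienerMeasure W) (ω : PathSpace) {η : ℝ} (hη : η < 2) :
    ∀ᶠ ε in 𝓝[>] (0 : ℝ), W.real (ball ω ε) ≤ Real.exp (-(ε ^ (-η))) := by
  filter_upwards [eventually_rpow_neg_le (show (0 : ℝ) < 1 / 256 by norm_num) hη,
    Ioo_mem_nhdsGT (show (0 : ℝ) < 1 / 8 by norm_num)] with ε hεη ⟨hε, hε8⟩
  have hX : 1 ≤ 1 / (64 * ε ^ 2) := by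
    rw [le_div_iff₀ (by positivity)]
    nlinarith
  obtain ⟨k, hk, hk'⟩ := exists_nat_pow_near hX one_lt_two
  rw [le_div_iff₀' (by positivity)] at hk
  have hlog : ε ^ (-η) ≤ 2 ^ k * Real.log 2 := by
    rw [div_lt_iff₀ (by positivity), pow_succ] at hk'
    refine hεη.trans ?_
    rw [Real.rpow_neg hε.le 2, Real.rpow_two, ← div_eq_mul_inv, div_le_iff₀ (by positivity)]
    nlinarith [Real.log_two_gt_d9, show (0 : ℝ) < 2 ^ k * ε ^ 2 by positivity]
  calc W.real (ball ω ε) ≤ (1 / 2) ^ 2 ^ k := hW.ball_le_half_pow ω hε.le hk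
    _ = Real.exp (-(2 ^ k * Real.log 2)) := by
      rw [← mul_neg, ← Real.log_inv, ← one_div, mul_comm, ← Nat.cast_ofNat, ← Nat.cast_pow,
        Real.exp_mul, Real.exp_log (by positivity), Real.rpow_natCast]
    _ ≤ Real.exp (-(ε ^ (-η))) := Real.exp_le_exp.2 (neg_le_neg hlog)

lemma IsWienerMeasure.levelOrd_eq_empty {W : Measure PathSpace} (hW : IsWienerMeasure W) {ξ : ℝ}
    (hξ : 0 < ξ) (hξ2 : ξ < 2) : levelOrd W ξ = ∅ := by
  refine eq_empty_of_forall_notMem fun ω hω => ?_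
  obtain ⟨η, hξη, hη⟩ := exists_between hξ2
  exact hξη.not_ge (le_of_mem_levelOrd hξ hω (hW.eventually_ball_le_of_lt_two ω hη))

/-- The increment over `[i / n, (i + 1) / n]` as a signed measure. -/
def incrementFunctional (n i : ℕ) : unitInterval →₀ ℝ :=
  .single (gridPt n (i + 1)) 1 - .single (gridPt n i) 1

lemma linearCombination_incrementFunctional (f : unitInterval → ℝ) (n i : ℕ) :
    Finsupp.linearCombination ℝ f (incrementFunctional n i) =
      f (gridPt n (i + 1)) - f (gridPt n i) := by
  simp [incrementFunctional]

lemma kernelForm_incrementFunctional {n i j : ℕ} (hi : i < n) (hj : j < n) :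
    kernelForm wienerKernel (incrementFunctional n i) (incrementFunctional n j) =
      if i = j then (n : ℝ)⁻¹ else 0 := by
  have hn : (0 : ℝ) ≤ n := n.cast_nonneg
  simp only [kernelForm_apply, linearCombination_incrementFunctional, wienerKernel,
    coe_gridPt hi.le, coe_gridPt hj.le, coe_gridPt (Nat.succ_le_iff.2 hi),
    coe_gridPt (Nat.succ_le_iff.2 hj), min_div_div_right hn, ← Nat.cast_min]
  rcases lt_trichotomy i j with h | rfl | h
  · rw [if_neg h.ne, min_eq_left (by lia), min_eq_left (by lia), min_eq_left (by lia),
      min_eq_left h.le]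
    ring
  · rw [if_pos rfl, min_self, min_eq_right (by lia), min_eq_left (by lia), min_self]
    push_cast
    ring
  · rw [if_neg h.ne', min_eq_right (by lia), min_eq_right (by lia), min_eq_right (by lia),
      min_eq_right h.le]
    ring

/-- The functional `∑ᵢ aᵢ (increment over [i / n, (i + 1) / n])`. -/
def weightedIncrements (n : ℕ) (a : ℕ → ℝ) : unitInterval →₀ ℝ :=
  ∑ i ∈ Finset.range n, a i • incrementFunctional n i

lemma linearCombination_weightedIncrements (f : unitInterval → ℝ) (n : ℕ) (a : ℕ → ℝ) :
    Finsupp.linearCombination ℝ f (weightedIncrements n a) =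
      ∑ i ∈ Finset.range n, a i * (f (gridPt n (i + 1)) - f (gridPt n i)) := by
  simp [weightedIncrements, linearCombination_incrementFunctional]

lemma kernelForm_weightedIncrements (n : ℕ) (a : ℕ → ℝ) :
    kernelForm wienerKernel (weightedIncrements n a) (weightedIncrements n a) =
      (∑ i ∈ Finset.range n, a i ^ 2) / n := by
  simp only [weightedIncrements, map_sum, map_smul, LinearMap.sum_apply, LinearMap.smul_apply,
    smul_eq_mul, Finset.sum_div]
  refine Finset.sum_congr rfl fun i hi => ?_
  rw [Finset.sum_eq_single_of_mem i hi fun j hj hji => ?_]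
  · rw [kernelForm_incrementFunctional (Finset.mem_range.1 hi) (Finset.mem_range.1 hi), if_pos rfl]
    ring
  · rw [kernelForm_incrementFunctional (Finset.mem_range.1 hj) (Finset.mem_range.1 hi),
      if_neg hji, mul_zero]

lemma sum_increment_sq (ω : PathSpace) (n : ℕ) :
    ∑ i ∈ Finset.range n, (ω.1 (gridPt n (i + 1)) - ω.1 (gridPt n i)) ^ 2 =
      n * Qvar ω n ^ 2 := by
  rcases n.eq_zero_or_pos with rfl | hn
  · simp
  rw [Qvar, Real.sq_sqrt (by positivity)]
  field_simp

lemma sum_abs_increment_le (ω : PathSpace) (n : ℕ) :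
    ∑ i ∈ Finset.range n, |ω.1 (gridPt n (i + 1)) - ω.1 (gridPt n i)| ≤ n * Qvar ω n := by
  have hsq := sq_sum_le_card_mul_sum_sq (s := Finset.range n)
    (f := fun i => |ω.1 (gridPt n (i + 1)) - ω.1 (gridPt n i)|)
  simp only [sq_abs, Finset.card_range, sum_increment_sq] at hsq
  refine (abs_le_of_sq_le_sq' (by nlinarith) ?_).2
  exact mul_nonneg n.cast_nonneg (Real.sqrt_nonneg _)

lemma mul_Qvar_sq_div_two_le_of_mem_ball {ω ω' : PathSpace} {ε : ℝ} (hω' : ω' ∈ ball ω ε) {n : ℕ}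
    (hQ : 4 * ε ≤ Qvar ω n) :
    n * Qvar ω n ^ 2 / 2 ≤ ∑ i ∈ Finset.range n, (ω.1 (gridPt n (i + 1)) - ω.1 (gridPt n i)) *
      (ω'.1 (gridPt n (i + 1)) - ω'.1 (gridPt n i)) := by
  let a (i : ℕ) : ℝ := ω.1 (gridPt n (i + 1)) - ω.1 (gridPt n i)
  have hε : 0 < ε := dist_nonneg.trans_lt hω'
  have hterm (i : ℕ) : a i ^ 2 - 2 * ε * |a i| ≤
      a i * (ω'.1 (gridPt n (i + 1)) - ω'.1 (gridPt n i)) := by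
    have hleft := abs_le.1 ((abs_apply_sub_le_dist ω' ω (gridPt n i)).trans (mem_ball.1 hω').le)
    have hright :=
      abs_le.1 ((abs_apply_sub_le_dist ω' ω (gridPt n (i + 1))).trans (mem_ball.1 hω').le)
    have hdiff : |ω'.1 (gridPt n (i + 1)) - ω'.1 (gridPt n i) - a i| ≤ 2 * ε :=
      abs_le.2 ⟨by linarith [hleft.2, hright.1], by linarith [hleft.1, hright.2]⟩
    have hmul := mul_le_mul_of_nonneg_left hdiff (abs_nonneg (a i))
    rw [← abs_mul] at hmul
    linarith [(abs_le.1 hmul).1]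
  refine le_trans ?_ (Finset.sum_le_sum fun i _ => hterm i)
  rw [Finset.sum_sub_distrib, ← Finset.mul_sum, sum_increment_sq]
  have hnQ : 0 ≤ n * Qvar ω n := mul_nonneg n.cast_nonneg (Real.sqrt_nonneg _)
  nlinarith [mul_le_mul_of_nonneg_left (sum_abs_increment_le ω n) hε.le,
    mul_le_mul_of_nonneg_right hQ hnQ]

/-- A path `ω'` uniformly close to `ω` has a large inner product of increments with `ω`, and this
inner product is Gaussian with variance `Qvar ω n ^ 2` under `W`. -/
lemma IsWienerMeasure.ball_le_exp_Qvar {W : Measure PathSpace} (hW : IsWienerMeasure W)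
    {ω : PathSpace} {n : ℕ} (hn : n ≠ 0) {ε : ℝ} (hQ : 4 * ε ≤ Qvar ω n) :
    W.real (ball ω ε) ≤ Real.exp (-(n ^ 2 * Qvar ω n ^ 2 / 8)) := by
  have := hW.1
  let a (i : ℕ) : ℝ := ω.1 (gridPt n (i + 1)) - ω.1 (gridPt n i)
  have hvar : kernelForm wienerKernel (weightedIncrements n a) (weightedIncrements n a) =
      Qvar ω n ^ 2 := by
    rw [kernelForm_weightedIncrements, sum_increment_sq, mul_div_cancel_left₀ _ (by positivity)]
  have hsub : ball ω ε ⊆ (fun ω' => Finsupp.linearCombination ℝ ω'.1 (weightedIncrements n a)) ⁻¹'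
      Ici (n * Qvar ω n ^ 2 / 2) := by
    intro ω' hω'
    rw [mem_preimage, mem_Ici, linearCombination_weightedIncrements]
    exact mul_Qvar_sq_div_two_le_of_mem_ball hω' hQ
  refine (measureReal_mono hsub).trans ?_
  rw [← map_measureReal_apply (continuous_linearCombination_path _).measurable measurableSet_Ici,
    IsGaussianProcess.map_linearCombination hW, hvar]
  refine (gaussianReal_Ici_le _ (by positivity)).trans_eq ?_
  rw [Real.coe_toNNReal _ (sq_nonneg _)]
  rcases eq_or_ne (Qvar ω n) 0 with h | h
  · simp [h]
  · congr 1
    field_simp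
    ring

lemma eventually_rpow_neg_le_Qvar {q p : ℝ} (hq : 0 < q) (hqp : q < p) {ω : PathSpace}
    (hω : ω ∈ holderCrit q) : ∀ᶠ n : ℕ in atTop, (n : ℝ) ^ (-p) ≤ Qvar ω n := by
  have hupper : oreyUpper ω < p := by
    rw [hω.2.2]
    exact EReal.coe_lt_coe_iff.2 hqp
  have hlower : ((0 : ℝ) : EReal) < oreyLower ω := by
    rw [hω.2.1]
    exact EReal.coe_lt_coe_iff.2 hq
  filter_upwards [eventually_lt_of_limsup_lt hupper, eventually_lt_of_lt_liminf hlower,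
    eventually_gt_atTop 1] with n hltp hpos hn
  rw [EReal.coe_lt_coe_iff] at hltp hpos
  have hn' : (1 : ℝ) < n := by exact_mod_cast hn
  have hQ : 0 < Qvar ω n := by
    refine lt_of_le_of_ne (Real.sqrt_nonneg _) fun h => ?_
    simp [← h] at hpos
  rw [div_lt_iff₀ (Real.log_pos hn')] at hltp
  rw [← Real.log_le_log_iff (by positivity) hQ, Real.log_rpow (by linarith)]
  linarith

/-- The grid size `n = ⌊(4 ε) ^ (-1 / p)⌋₊` is the largest one with `4 ε ≤ n ^ (-p)`. -/
lemma exists_eventually_rpow_neg_le_natFloor {p : ℝ} (hp : 0 < p) (hp1 : p < 1) :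
    ∃ c > 0, ∀ᶠ ε in 𝓝[>] (0 : ℝ), 4 * ε ≤ (⌊(4 * ε) ^ (-p⁻¹)⌋₊ : ℝ) ^ (-p) ∧
      c * ε ^ (-(2 / p - 2)) ≤ (⌊(4 * ε) ^ (-p⁻¹)⌋₊ : ℝ) ^ (2 - 2 * p) := by
  refine ⟨(4 ^ (-p⁻¹) / 2 : ℝ) ^ (2 - 2 * p), by positivity, ?_⟩
  filter_upwards [Ioo_mem_nhdsGT (show (0 : ℝ) < 1 / 4 by norm_num)] with ε ⟨hε, hε4⟩
  set X := (4 * ε) ^ (-p⁻¹) with hX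
  have hX1 : 1 ≤ X := Real.one_le_rpow_of_pos_of_le_one_of_nonpos (by positivity) (by linarith)
    (neg_nonpos.2 (by positivity))
  have hn : (1 : ℝ) ≤ ⌊X⌋₊ := by exact_mod_cast Nat.floor_pos.2 hX1
  constructor
  · calc 4 * ε = X ^ (-p) := by
          rw [hX, ← Real.rpow_mul (by positivity), neg_mul_neg, inv_mul_cancel₀ hp.ne',
            Real.rpow_one]
      _ ≤ (⌊X⌋₊ : ℝ) ^ (-p) :=
        Real.rpow_le_rpow_of_nonpos (by linarith) (Nat.floor_le (by linarith)) (by linarith)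
  · calc (4 ^ (-p⁻¹) / 2 : ℝ) ^ (2 - 2 * p) * ε ^ (-(2 / p - 2)) = (X / 2) ^ (2 - 2 * p) := by
          have hexp : -(2 / p - 2) = -p⁻¹ * (2 - 2 * p) := by field_simp
          rw [hX, Real.mul_rpow (by norm_num) hε.le, mul_div_right_comm,
            Real.mul_rpow (by positivity) (by positivity), ← Real.rpow_mul hε.le, hexp]
      _ ≤ (⌊X⌋₊ : ℝ) ^ (2 - 2 * p) :=
        Real.rpow_le_rpow (by positivity) (by linarith [Nat.lt_floor_add_one X]) (by linarith)

lemma tendsto_natFloor_rpow_neg {p : ℝ} (hp : 0 < p) :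
    Tendsto (fun ε : ℝ => ⌊(4 * ε) ^ (-p⁻¹)⌋₊) (𝓝[>] 0) atTop := by
  have hmul : Tendsto (fun ε : ℝ => 4 * ε) (𝓝[>] 0) (𝓝[>] 0) :=
    by simpa using TendstoNhdsWithinIoi.const_mul (four_pos (α := ℝ)) (tendsto_id (x := 𝓝[>] 0))
  exact tendsto_nat_floor_atTop.comp
    ((tendsto_rpow_neg_nhdsGT_zero (neg_neg_iff_pos.2 (inv_pos.2 hp))).comp hmul)

lemma IsWienerMeasure.eventually_ball_le_of_mem_holderCrit {W : Measure PathSpace}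
    (hW : IsWienerMeasure W) {q η : ℝ} (hq : 0 < q) {ω : PathSpace} (hω : ω ∈ holderCrit q)
    (hη : 0 < η) (hηq : η < 2 / q - 2) :
    ∀ᶠ ε in 𝓝[>] (0 : ℝ), W.real (ball ω ε) ≤ Real.exp (-(ε ^ (-η))) := by
  obtain ⟨η', hηη', hη'q⟩ := exists_between hηq
  have hη' : 0 < η' := hη.trans hηη'
  set p := 2 / (η' + 2) with hp_def
  have hp : 0 < p := by positivity
  have hp1 : p < 1 := (div_lt_one (by positivity)).2 (by linarith)
  have hqp : q < p := (lt_div_comm₀ hq (by positivity)).2 (by linarith)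
  have hpη' : 2 / p - 2 = η' := by
    rw [hp_def, div_div_cancel₀ two_ne_zero]
    ring
  obtain ⟨c, hc, hfloor⟩ := exists_eventually_rpow_neg_le_natFloor hp hp1
  filter_upwards [hfloor, (tendsto_natFloor_rpow_neg hp).eventually
    ((eventually_rpow_neg_le_Qvar hq hqp hω).and (eventually_gt_atTop 0)),
    eventually_rpow_neg_le (show 0 < c / 8 by positivity) hηη'] with ε ⟨hε, hcε⟩ ⟨hQ, hn⟩ hεη
  set n := ⌊(4 * ε) ^ (-p⁻¹)⌋₊
  rw [hpη'] at hcε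
  have hpow : (n : ℝ) ^ (2 - 2 * p) ≤ n ^ 2 * Qvar ω n ^ 2 := by
    calc (n : ℝ) ^ (2 - 2 * p) = n ^ 2 * ((n : ℝ) ^ (-p)) ^ 2 := by
          rw [← Real.rpow_natCast, ← Real.rpow_natCast, ← Real.rpow_mul n.cast_nonneg,
            ← Real.rpow_add (by exact_mod_cast hn)]
          push_cast
          ring_nf
      _ ≤ n ^ 2 * Qvar ω n ^ 2 := by gcongr
  refine (hW.ball_le_exp_Qvar hn.ne' (hε.trans hQ)).trans (Real.exp_le_exp.2 (neg_le_neg ?_))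
  linarith

/-! ### Lower bounds for the Wiener measure of balls -/

lemma exp_neg_le_measureReal_setOf_forall_mem {Ω ι : Type*} [MeasurableSpace Ω] [Countable ι]
    {μ : Measure Ω} [IsFiniteMeasure μ] {X : ι → Ω → ℝ} (hX : iIndepFun X μ)
    (hmeas : ∀ i, Measurable (X i)) {S : ι → Set ℝ} (hS : ∀ i, MeasurableSet (S i)) {cost : ι → ℝ}
    (hcost : ∀ i, Real.exp (-cost i) ≤ (μ.map (X i)).real (S i)) {B : ℝ}
    (hB : ∀ s : Finset ι, ∑ i ∈ s, cost i ≤ B) :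
    Real.exp (-B) ≤ μ.real {ω | ∀ i, X i ω ∈ S i} := by
  let A (s : Finset ι) : Set Ω := {ω | ∀ i ∈ s, X i ω ∈ S i}
  have hA_meas (s : Finset ι) : MeasurableSet (A s) := by
    simp only [A, ofPred_forall]
    exact Finset.measurableSet_biInter s fun i _ => hmeas i (hS i)
  have hA_anti : Antitone A := fun s t hst ω hω i hi => hω i (hst hi)
  have hA_inter : ⋂ s, A s = {ω | ∀ i, X i ω ∈ S i} :=
    ext fun ω => ⟨fun h i => mem_iInter.1 h {i} i (Finset.mem_singleton_self i),
      fun h => mem_iInter.2 fun s i _ => h i⟩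
  have hlim : Tendsto (fun s => μ.real (A s)) atTop (𝓝 (μ.real {ω | ∀ i, X i ω ∈ S i})) := by
    rw [← hA_inter]
    exact (ENNReal.tendsto_toReal (measure_ne_top _ _)).comp (tendsto_measure_iInter_atTop
      (fun s => (hA_meas s).nullMeasurableSet) hA_anti ⟨∅, measure_ne_top _ _⟩)
  refine ge_of_tendsto' hlim fun s => ?_
  calc Real.exp (-B) ≤ Real.exp (∑ i ∈ s, -cost i) := by
        rw [Finset.sum_neg_distrib]
        exact Real.exp_le_exp.2 (neg_le_neg (hB s))
    _ = ∏ i ∈ s, Real.exp (-cost i) := Real.exp_sum _ _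
    _ ≤ ∏ i ∈ s, (μ.map (X i)).real (S i) :=
      Finset.prod_le_prod (fun _ _ => (Real.exp_pos _).le) fun i _ => hcost i
    _ = μ.real (A s) := (measureReal_setOf_forall_mem hX hmeas hS s).symm

/-- The dyadic level of a Schauder coefficient; the endpoint coefficient `none` has level `0`. -/
def schauderLevel : Option DyadicIndex → ℕ
  | none => 0
  | some i => i.1

lemma schauderVar_le_one (a : Option DyadicIndex) : (schauderVar a : ℝ) ≤ 1 := by
  cases a with
  | none => simp [schauderVar]
  | some i =>
    simp only [schauderVar, NNReal.coe_div, NNReal.coe_one, NNReal.coe_pow, NNReal.coe_ofNat]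
    exact (div_le_one (by positivity)).2 (one_le_pow₀ one_le_two)

lemma inv_schauderVar_le (a : Option DyadicIndex) :
    (schauderVar a : ℝ)⁻¹ ≤ 4 * 2 ^ schauderLevel a := by
  cases a with
  | none => norm_num [schauderVar, schauderLevel]
  | some i =>
    norm_num [schauderVar, schauderLevel, pow_add, mul_comm]

lemma abs_schauderCoeff_le_of_mem_holderBall {b C : ℝ} (hb : 0 ≤ b) {ω : PathSpace}
    (h : ω ∈ holderBall b C) (a : Option DyadicIndex) :
    |schauderCoeff ω.1 a| ≤ C * ((2 : ℝ) ^ (-b)) ^ schauderLevel a := by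
  cases a with
  | none => simpa [ω.2, schauderLevel] using h 1 0
  | some i => exact abs_schauderCoeff_some_le_of_mem_holderBall hb h i

/-- The price `-log ℙ` allowed for a coefficient: `M` below level `K`, plus a term that is summable
over all coefficients. -/
def boxCost (M : ℝ) (K : ℕ) (a : Option DyadicIndex) : ℝ :=
  (if schauderLevel a < K then M else 0) + (1 / 4) ^ schauderLevel a

lemma sum_two_pow_mul_ite_lt_le {M : ℝ} (hM : 0 ≤ M) (K N : ℕ) :
    ∑ k ∈ Finset.range N, 2 ^ k * (if k < K then M else 0) ≤ (2 ^ K - 1) * M := by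
  calc ∑ k ∈ Finset.range N, 2 ^ k * (if k < K then M else 0)
      = ∑ k ∈ Finset.range N with k < K, 2 ^ k * M := by simp [Finset.sum_filter]
    _ ≤ ∑ k ∈ Finset.range K, 2 ^ k * M :=
      Finset.sum_le_sum_of_subset_of_nonneg
        (fun k hk => Finset.mem_range.2 (Finset.mem_filter.1 hk).2) fun _ _ _ => by positivity
    _ = (2 ^ K - 1) * M := by
      rw [← Finset.sum_mul, geom_sum_eq (by norm_num)]
      norm_num

lemma sum_boxCost_le {M : ℝ} (hM : 0 ≤ M) (K : ℕ) (s : Finset (Option DyadicIndex)) :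
    ∑ a ∈ s, boxCost M K a ≤ 2 ^ K * M + 3 := by
  let N := s.sup schauderLevel + 1
  let t : Finset DyadicIndex := (Finset.range N).sigma fun _ => Finset.univ
  have hsub : s ⊆ Finset.insertNone t := by
    intro a ha
    refine Finset.mem_insertNone.2 fun i hi => Finset.mem_sigma.2 ⟨?_, Finset.mem_univ _⟩
    obtain rfl : a = some i := hi
    exact Finset.mem_range.2 (Nat.lt_succ_of_le (Finset.le_sup (f := schauderLevel) ha))
  have hcost (a : Option DyadicIndex) : 0 ≤ boxCost M K a := by
    unfold boxCost
    positivity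
  have hsome : ∑ i ∈ t, boxCost M K (some i) = ∑ k ∈ Finset.range N,
      (2 ^ k * (if k < K then M else 0) + (1 / 2) ^ k) := by
    rw [Finset.sum_sigma]
    refine Finset.sum_congr rfl fun k _ => ?_
    have hpow : (1 / 2 : ℝ) ^ k = 2 ^ k * (1 / 4) ^ k := by
      rw [← mul_pow]
      norm_num
    rw [hpow, ← mul_add]
    refine (Finset.sum_const ((if k < K then M else 0) + (1 / 4 : ℝ) ^ k)).trans ?_
    simp [mul_add]
  have hnone : boxCost M K none ≤ M + 1 := by
    rw [boxCost, schauderLevel, pow_zero]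
    gcongr
    split_ifs <;> linarith
  refine (Finset.sum_le_sum_of_subset_of_nonneg hsub fun a _ _ => hcost a).trans ?_
  rw [Finset.sum_insertNone, hsome, Finset.sum_add_distrib]
  linarith [sum_two_pow_mul_ite_lt_le hM K N, sum_geometric_two_le N]

lemma exp_neg_natCast_le_half_pow (n : ℕ) : Real.exp (-n) ≤ (1 / 2) ^ n := by
  rw [Real.exp_neg, one_div, inv_pow, ← Real.exp_one_pow]
  gcongr
  exact Real.exp_one_gt_two.le

lemma exp_neg_le_gaussianReal_Icc {v : ℝ≥0} (hv : v ≠ 0) (hv1 : (v : ℝ) ≤ 1) {c L : ℝ} (K : ℕ)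
    (hL : (c ^ 2 + ((1 / 2) ^ K) ^ 2) * (v : ℝ)⁻¹ ≤ L) :
    Real.exp (-(↑(K + 1) + L)) ≤
      (gaussianReal 0 v).real (Icc (c - (1 / 2) ^ K) (c + (1 / 2) ^ K)) := by
  set δ : ℝ := (1 / 2) ^ K with hδ
  have hδ0 : 0 < δ := by positivity
  have hR (x : ℝ) (hx : x ∈ Icc (c - δ) (c + δ)) : (x - 0) ^ 2 ≤ 2 * (c ^ 2 + δ ^ 2) := by
    have hsq : (x - c) ^ 2 ≤ δ ^ 2 := sq_le_sq' (by linarith [hx.1]) (by linarith [hx.2])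
    nlinarith [sq_nonneg (x - 2 * c)]
  have hsqrt0 : 0 < √(2 * Real.pi * v) :=
    Real.sqrt_pos.2 (mul_pos Real.two_pi_pos (NNReal.coe_pos.2 (pos_iff_ne_zero.2 hv)))
  have hsqrt : √(2 * Real.pi * v) ≤ 4 := by
    rw [Real.sqrt_le_left (by norm_num)]
    nlinarith [Real.pi_le_four, Real.pi_pos]
  have hdensity : δ / 2 ≤ (c + δ - (c - δ)) * (√(2 * Real.pi * v))⁻¹ := by
    rw [← div_eq_mul_inv, le_div_iff₀ hsqrt0]
    nlinarith
  have hexp : Real.exp (-L) ≤ Real.exp (-(2 * (c ^ 2 + δ ^ 2)) / (2 * v)) := by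
    rw [neg_div, mul_div_mul_left _ _ two_ne_zero, div_eq_mul_inv]
    exact Real.exp_le_exp.2 (neg_le_neg hL)
  calc Real.exp (-(↑(K + 1) + L)) = Real.exp (-↑(K + 1)) * Real.exp (-L) := by
        rw [neg_add, Real.exp_add]
    _ ≤ δ / 2 * Real.exp (-L) := by
      gcongr
      exact (exp_neg_natCast_le_half_pow _).trans_eq (by rw [pow_succ, hδ]; ring)
    _ ≤ (c + δ - (c - δ)) * (√(2 * Real.pi * v))⁻¹ *
        Real.exp (-(2 * (c ^ 2 + δ ^ 2)) / (2 * v)) :=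
      mul_le_mul hdensity hexp (Real.exp_pos _).le ((half_pos hδ0).le.trans hdensity)
    _ ≤ _ := by
      rw [mul_assoc]
      exact le_gaussianReal_Icc 0 hv (by linarith) hR

lemma eventually_succ_le_pow {r : ℝ} (hr : 1 < r) : ∀ᶠ k : ℕ in atTop, (k + 1 : ℝ) ≤ r ^ k := by
  have hlim : Tendsto (fun k : ℕ => (k : ℝ) ^ 1 / r ^ k + k ^ 0 / r ^ k) atTop (𝓝 (0 + 0)) :=
    (tendsto_pow_const_div_const_pow_of_one_lt 1 hr).add
      (tendsto_pow_const_div_const_pow_of_one_lt 0 hr)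
  rw [add_zero] at hlim
  filter_upwards [hlim.eventually_le_const one_pos] with k hk
  rwa [← add_div, pow_one, pow_zero, div_le_one (by positivity)] at hk

lemma eventually_exp_neg_quarter_pow_le {r : ℝ} (hr : 1 < r) :
    ∀ᶠ k : ℕ in atTop, Real.exp (-(1 / 4) ^ k) ≤ 1 - 2 * Real.exp (-(2 * r ^ k)) := by
  filter_upwards [eventually_succ_le_pow hr] with k hk
  set y : ℝ := (1 / 4) ^ k with hy
  have hy0 : 0 < y := by positivity
  have hy1 : y ≤ 1 := pow_le_one₀ (by norm_num) (by norm_num)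
  have htail : Real.exp (-(2 * r ^ k)) ≤ y / 4 := by
    calc Real.exp (-(2 * r ^ k)) ≤ Real.exp (-↑(2 * (k + 1))) := by
          push_cast
          gcongr
      _ ≤ (1 / 2) ^ (2 * (k + 1)) := exp_neg_natCast_le_half_pow _
      _ = y / 4 := by
        rw [pow_mul, pow_succ, hy]
        norm_num
        ring
  have hexp : Real.exp (-y) ≤ 1 / (1 + y) := by
    rw [Real.exp_neg, one_div]
    gcongr
    linarith [Real.add_one_le_exp y]
  refine hexp.trans ((div_le_iff₀ (by positivity)).2 ?_)
  nlinarith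

/-- An interval for each Schauder coefficient: small and centred at the coefficient of `ω` below
level `K`, of size `ρ ^ k` around `0` at the levels `k ≥ K`. -/
def coeffBox (ω : PathSpace) (ρ : ℝ) (K : ℕ) (a : Option DyadicIndex) : Set ℝ :=
  if schauderLevel a < K then
    Icc (schauderCoeff ω.1 a - (1 / 2) ^ K) (schauderCoeff ω.1 a + (1 / 2) ^ K)
  else Icc (-ρ ^ schauderLevel a) (ρ ^ schauderLevel a)

lemma measurableSet_coeffBox (ω : PathSpace) (ρ : ℝ) (K : ℕ) (a : Option DyadicIndex) :
    MeasurableSet (coeffBox ω ρ K a) := by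
  rw [coeffBox]
  split_ifs <;> exact measurableSet_Icc

lemma abs_sub_le_of_mem_coeffBox {ω : PathSpace} {ρ C x : ℝ} {K : ℕ} {a : Option DyadicIndex}
    (hω : |schauderCoeff ω.1 a| ≤ C * ρ ^ schauderLevel a) (hx : x ∈ coeffBox ω ρ K a) :
    |x - schauderCoeff ω.1 a| ≤
      if schauderLevel a < K then (1 / 2) ^ K else (C + 1) * ρ ^ schauderLevel a := by
  unfold coeffBox at hx
  split_ifs at hx ⊢
  · exact abs_le.2 ⟨by linarith [hx.1], by linarith [hx.2]⟩
  · linarith [abs_sub x (schauderCoeff ω.1 a), abs_le.2 hx]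

lemma sum_ite_const_mul_pow_le {ρ : ℝ} (hρ : 0 ≤ ρ) (hρ1 : ρ < 1) {x y : ℝ} (hx : 0 ≤ x)
    (hy : 0 ≤ y) (K N : ℕ) :
    ∑ k ∈ Finset.range N, (if k < K then x else y * ρ ^ k) ≤ K * x + y * (ρ ^ K / (1 - ρ)) := by
  have hnonneg (k : ℕ) : 0 ≤ if k < K then x else y * ρ ^ k := by positivity
  have hlow : ∑ k ∈ Finset.range K, (if k < K then x else y * ρ ^ k) = K * x := by
    rw [Finset.sum_congr rfl fun k hk => if_pos (Finset.mem_range.1 hk)]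
    simp
  have hhigh : ∑ k ∈ Finset.Ico K (K + N), (if k < K then x else y * ρ ^ k) ≤
      y * (ρ ^ K / (1 - ρ)) := by
    rw [Finset.sum_congr rfl fun k hk => if_neg (Finset.mem_Ico.1 hk).1.not_gt, ← Finset.mul_sum]
    exact mul_le_mul_of_nonneg_left (geom_sum_Ico_le_of_lt_one hρ hρ1) hy
  calc ∑ k ∈ Finset.range N, (if k < K then x else y * ρ ^ k)
      ≤ ∑ k ∈ Finset.range (K + N), (if k < K then x else y * ρ ^ k) :=
        Finset.sum_le_sum_of_subset_of_nonneg (Finset.range_subset_range.2 (Nat.le_add_left N K))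
          fun k _ _ => hnonneg k
    _ ≤ K * x + y * (ρ ^ K / (1 - ρ)) := by
      rw [← Finset.sum_range_add_sum_Ico _ (Nat.le_add_right K N), hlow]
      gcongr

lemma dist_le_of_forall_mem_coeffBox {ω ω' : PathSpace} {ρ C : ℝ} (hρ : 0 < ρ) (hρ1 : ρ < 1)
    (hC : 0 ≤ C) (hω : ∀ a, |schauderCoeff ω.1 a| ≤ C * ρ ^ schauderLevel a) {K : ℕ} (hK : 0 < K)
    (hω' : ∀ a, schauderCoeff ω'.1 a ∈ coeffBox ω ρ K a) :
    dist ω' ω ≤ (K + 1) * (1 / 2) ^ K + (C + 1) * (ρ ^ K / (1 - ρ)) := by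
  have hcoeff (a : Option DyadicIndex) := abs_sub_le_of_mem_coeffBox (hω a) (hω' a)
  have hnone : |schauderCoeff (fun t => ω'.1 t - ω.1 t) none| ≤ (1 / 2) ^ K := by
    rw [schauderCoeff_sub]
    exact (hcoeff none).trans_eq (if_pos hK)
  have htail : 0 ≤ (C + 1) * (ρ ^ K / (1 - ρ)) :=
    mul_nonneg (by linarith) (div_nonneg (by positivity) (sub_nonneg.2 hρ1.le))
  refine (ContinuousMap.dist_le (add_nonneg (by positivity) htail)).2 fun t => ?_
  rw [Real.dist_eq]
  refine abs_le_of_schauderCoeff_le (f := fun t => ω'.1 t - ω.1 t) (by fun_prop)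
    (by simp [ω.2, ω'.2]) (e := fun k => if k < K then (1 / 2) ^ K else (C + 1) * ρ ^ k)
    (fun k => by positivity) hnone (fun i => ?_) (fun N => ?_) t
  · rw [schauderCoeff_sub]
    exact hcoeff (some i)
  · linarith [sum_ite_const_mul_pow_le hρ.le hρ1 (show (0 : ℝ) ≤ (1 / 2) ^ K by positivity)
      (show 0 ≤ C + 1 by linarith) K N]

lemma exp_neg_le_gaussianReal_coeffBox_of_lt {ω : PathSpace} {ρ C : ℝ} (hρ : 1 / 2 ≤ ρ)
    (hρ2 : 1 ≤ 2 * ρ ^ 2) {K : ℕ} {a : Option DyadicIndex} (ha : schauderLevel a < K)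
    (hω : |schauderCoeff ω.1 a| ≤ C * ρ ^ schauderLevel a) :
    Real.exp (-(↑(K + 1) + 4 * (C ^ 2 + 1) * (2 * ρ ^ 2) ^ K)) ≤
      (gaussianReal 0 (schauderVar a)).real (coeffBox ω ρ K a) := by
  rw [coeffBox, if_pos ha]
  refine exp_neg_le_gaussianReal_Icc (schauderVar_ne_zero a) (schauderVar_le_one a) K ?_
  set l := schauderLevel a
  have hcoeff : schauderCoeff ω.1 a ^ 2 ≤ (C * ρ ^ l) ^ 2 := sq_le_sq.2 (hω.trans (le_abs_self _))
  have hhalf : (1 / 2 : ℝ) ^ K ≤ ρ ^ l :=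
    (pow_le_pow_of_le_one (by norm_num) (by norm_num) ha.le).trans (by gcongr)
  calc (schauderCoeff ω.1 a ^ 2 + ((1 / 2) ^ K) ^ 2) * (schauderVar a : ℝ)⁻¹
      ≤ ((C * ρ ^ l) ^ 2 + (ρ ^ l) ^ 2) * (4 * 2 ^ l) := by
        gcongr
        exact inv_schauderVar_le a
    _ = 4 * (C ^ 2 + 1) * (2 * ρ ^ 2) ^ l := by ring
    _ ≤ 4 * (C ^ 2 + 1) * (2 * ρ ^ 2) ^ K := by gcongr

lemma exp_neg_quarter_pow_le_gaussianReal_coeffBox {ω : PathSpace} {ρ : ℝ} (hρ : 0 ≤ ρ) {K : ℕ}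
    (hK : 0 < K) {a : Option DyadicIndex} (ha : K ≤ schauderLevel a)
    (htail : Real.exp (-(1 / 4) ^ schauderLevel a) ≤
      1 - 2 * Real.exp (-(2 * (2 * ρ ^ 2) ^ schauderLevel a))) :
    Real.exp (-(1 / 4) ^ schauderLevel a) ≤
      (gaussianReal 0 (schauderVar a)).real (coeffBox ω ρ K a) := by
  rw [coeffBox, if_neg ha.not_gt]
  refine htail.trans (le_trans (le_of_eq ?_)
    (one_sub_two_mul_exp_le_gaussianReal_Icc _ (pow_nonneg hρ _)))
  cases a with
  | none => exact absurd ha hK.not_ge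
  | some i =>
    have hexp : -(2 * (2 * ρ ^ 2) ^ i.1) = -(ρ ^ i.1) ^ 2 / (2 * (1 / 2 ^ (i.1 + 2))) := by
      field_simp
      ring
    simp only [schauderLevel, schauderVar, NNReal.coe_div, NNReal.coe_one, NNReal.coe_pow,
      NNReal.coe_ofNat, hexp]

lemma eventually_exp_neg_boxCost_le_gaussianReal {ω : PathSpace} {ρ C : ℝ} (hρ : 1 / 2 ≤ ρ)
    (hρ2 : 1 < 2 * ρ ^ 2) (hω : ∀ a, |schauderCoeff ω.1 a| ≤ C * ρ ^ schauderLevel a) :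
    ∀ᶠ K : ℕ in atTop, ∀ a,
      Real.exp (-boxCost (↑(K + 1) + 4 * (C ^ 2 + 1) * (2 * ρ ^ 2) ^ K) K a) ≤
        (gaussianReal 0 (schauderVar a)).real (coeffBox ω ρ K a) := by
  obtain ⟨K₀, hK₀⟩ := eventually_atTop.1 (eventually_exp_neg_quarter_pow_le hρ2)
  filter_upwards [eventually_ge_atTop K₀, eventually_gt_atTop 0] with K hK hK_pos a
  rcases lt_or_ge (schauderLevel a) K with ha | ha
  · refine le_trans ?_ (exp_neg_le_gaussianReal_coeffBox_of_lt hρ hρ2.le ha (hω a))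
    rw [boxCost, if_pos ha]
    exact Real.exp_le_exp.2 (neg_le_neg (le_add_of_nonneg_right (by positivity)))
  · rw [boxCost, if_neg ha.not_gt, zero_add]
    exact exp_neg_quarter_pow_le_gaussianReal_coeffBox (by linarith) hK_pos ha
      (hK₀ _ (hK.trans ha))

lemma IsWienerMeasure.exists_eventually_exp_neg_le_ball {W : Measure PathSpace}
    (hW : IsWienerMeasure W) {ω : PathSpace} {ρ C : ℝ} (hρ1 : ρ < 1) (hρ : 1 / 2 ≤ ρ)
    (hρ2 : 1 < 2 * ρ ^ 2) (hC : 0 ≤ C)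
    (hω : ∀ a, |schauderCoeff ω.1 a| ≤ C * ρ ^ schauderLevel a) :
    ∃ r > 0, ∃ c, ∀ᶠ K : ℕ in atTop,
      Real.exp (-(c * (2 * (2 * ρ ^ 2)) ^ K)) ≤ W.real (ball ω (r * ρ ^ K)) := by
  have := hW.1
  have hρ0 : 0 < ρ := by linarith
  refine ⟨2 + (C + 1) / (1 - ρ), add_pos_of_pos_of_nonneg two_pos
    (div_nonneg (by linarith) (sub_nonneg.2 hρ1.le)), 4 * C ^ 2 + 8, ?_⟩
  filter_upwards [eventually_exp_neg_boxCost_le_gaussianReal hρ hρ2 hω, eventually_gt_atTop 0,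
    eventually_succ_le_pow hρ2, eventually_succ_le_pow (show 1 < 2 * ρ by nlinarith)]
    with K hbox hK hG hρK
  set M : ℝ := ↑(K + 1) + 4 * (C ^ 2 + 1) * (2 * ρ ^ 2) ^ K with hM
  have hM0 : 0 ≤ M := by positivity
  have hcost : 2 ^ K * M + 3 ≤ (4 * C ^ 2 + 8) * (2 * (2 * ρ ^ 2)) ^ K := by
    have hMle : M + 3 ≤ (4 * C ^ 2 + 8) * (2 * ρ ^ 2) ^ K := by
      push_cast at hM
      nlinarith [one_le_pow₀ hρ2.le (n := K)]
    rw [mul_pow 2]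
    nlinarith [one_le_pow₀ (one_le_two (α := ℝ)) (n := K)]
  have hsub : {ω' : PathSpace | ∀ a, schauderCoeff ω'.1 a ∈ coeffBox ω ρ K a} ⊆
      ball ω ((2 + (C + 1) / (1 - ρ)) * ρ ^ K) := by
    intro ω' hω'
    have hhalf : (K + 1) * (1 / 2 : ℝ) ^ K ≤ ρ ^ K := by
      rw [one_div, inv_pow, ← div_eq_mul_inv, div_le_iff₀' (by positivity), ← mul_pow]
      exact hρK
    refine (dist_le_of_forall_mem_coeffBox hρ0 hρ1 hC hω hK hω').trans_lt ?_
    have hpos : 0 < ρ ^ K := by positivity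
    have hradius : (2 + (C + 1) / (1 - ρ)) * ρ ^ K = 2 * ρ ^ K + (C + 1) * (ρ ^ K / (1 - ρ)) := by
      ring
    linarith
  calc Real.exp (-((4 * C ^ 2 + 8) * (2 * (2 * ρ ^ 2)) ^ K))
      ≤ Real.exp (-(2 ^ K * M + 3)) := Real.exp_le_exp.2 (neg_le_neg hcost)
    _ ≤ W.real {ω' | ∀ a, schauderCoeff ω'.1 a ∈ coeffBox ω ρ K a} :=
      exp_neg_le_measureReal_setOf_forall_mem hW.iIndepFun_schauderCoeff measurable_schauderCoeff
        (measurableSet_coeffBox ω ρ K) (fun a => (hW.map_schauderCoeff a).symm ▸ hbox a)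
        (sum_boxCost_le hM0 K)
    _ ≤ _ := measureReal_mono hsub

lemma eventually_exp_neg_rpow_le_of_geometric {μ : Measure PathSpace} [IsFiniteMeasure μ]
    {ω : PathSpace} {ρ r c A η : ℝ} (hρ : 0 < ρ) (hρ1 : ρ < 1) (hr : 0 < r) (hA : 0 < A)
    (hη : 0 ≤ η) (hAη : A < ρ ^ (-η))
    (h : ∀ᶠ K : ℕ in atTop, Real.exp (-(c * A ^ K)) ≤ μ.real (ball ω (r * ρ ^ K))) :
    ∀ᶠ ε in 𝓝[>] (0 : ℝ), Real.exp (-(ε ^ (-η))) ≤ μ.real (ball ω ε) := by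
  have hratio : Tendsto (fun n : ℕ => c * A * (A / ρ ^ (-η)) ^ n) atTop (𝓝 (c * A * 0)) :=
    (tendsto_pow_atTop_nhds_zero_of_lt_one (by positivity)
      ((div_lt_one (by positivity)).2 hAη)).const_mul _
  rw [mul_zero] at hratio
  obtain ⟨N, hN⟩ := eventually_atTop.1 (((tendsto_add_atTop_nat 1).eventually h).and
    (hratio.eventually_le_const (show 0 < r ^ (-η) by positivity)))
  filter_upwards [Ioo_mem_nhdsGT (show 0 < r * ρ ^ (N + 1) by positivity)] with ε ⟨hε, hεN⟩
  have hx : ε / r < ρ ^ (N + 1) := (div_lt_iff₀' hr).2 hεN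
  obtain ⟨n, hn, hn'⟩ := exists_nat_pow_near_of_lt_one (x := ε / r) (by positivity)
    (hx.le.trans (pow_le_one₀ hρ.le hρ1.le)) hρ hρ1
  have hNn : N ≤ n := by
    have := (pow_lt_pow_iff_right_of_lt_one₀ hρ hρ1).1 (hn.trans hx)
    lia
  obtain ⟨hball, hcA⟩ := hN n hNn
  have hcost : c * A ^ (n + 1) ≤ ε ^ (-η) := by
    rw [div_pow, mul_div_assoc', div_le_iff₀ (by positivity)] at hcA
    calc c * A ^ (n + 1) = c * A * A ^ n := by ring
      _ ≤ r ^ (-η) * (ρ ^ (-η)) ^ n := hcA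
      _ = (r * ρ ^ n) ^ (-η) := by
        rw [Real.mul_rpow hr.le (by positivity), ← Real.rpow_natCast, ← Real.rpow_natCast,
          ← Real.rpow_mul hρ.le, ← Real.rpow_mul hρ.le, mul_comm (-η)]
      _ ≤ ε ^ (-η) := Real.rpow_le_rpow_of_nonpos hε ((div_le_iff₀' hr).1 hn') (by linarith)
  calc Real.exp (-(ε ^ (-η)))
      ≤ Real.exp (-(c * A ^ (n + 1))) := Real.exp_le_exp.2 (neg_le_neg hcost)
    _ ≤ μ.real (ball ω (r * ρ ^ (n + 1))) := hball
    _ ≤ μ.real (ball ω ε) := measureReal_mono (ball_subset_ball ((lt_div_iff₀' hr).1 hn).le)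

lemma IsWienerMeasure.eventually_exp_neg_rpow_le_ball_of_mem_holderBall {W : Measure PathSpace}
    (hW : IsWienerMeasure W) {b C η : ℝ} (hb : 0 < b) (hb2 : b < 1 / 2) (hη : 2 / b - 2 < η)
    {ω : PathSpace} (hω : ω ∈ holderBall b C) :
    ∀ᶠ ε in 𝓝[>] (0 : ℝ), Real.exp (-(ε ^ (-η))) ≤ W.real (ball ω ε) := by
  have := hW.1
  have hbη : 2 - 2 * b < b * η := by
    rw [sub_lt_iff_lt_add, div_lt_iff₀' hb] at hη
    linarith
  have hη0 : 0 < η := pos_of_mul_pos_right (by linarith : 0 < b * η) hb.le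
  set ρ : ℝ := 2 ^ (-b) with hρ_def
  have hρ : 0 < ρ := by positivity
  have hρ1 : ρ < 1 := two_rpow_neg_lt_one hb
  have hρ_half : 1 / 2 ≤ ρ := by
    rw [one_div, ← Real.rpow_neg_one]
    exact Real.rpow_le_rpow_of_exponent_le one_le_two (by linarith)
  have hρ_sq : 2 * ρ ^ 2 = 2 ^ (1 - 2 * b) := by
    rw [hρ_def, ← Real.rpow_mul_natCast two_pos.le, sub_eq_add_neg, Real.rpow_add two_pos,
      Real.rpow_one]
    congr 2
    push_cast
    ring
  have hρ2 : 1 < 2 * ρ ^ 2 := hρ_sq ▸ Real.one_lt_rpow one_lt_two (by linarith)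
  have hAη : 2 * (2 * ρ ^ 2) < ρ ^ (-η) := by
    rw [hρ_sq, hρ_def, ← Real.rpow_mul two_pos.le, ← Real.rpow_one_add' two_pos.le (by linarith)]
    exact Real.rpow_lt_rpow_of_exponent_lt one_lt_two (by linarith)
  obtain ⟨r, hr, c, hball⟩ := hW.exists_eventually_exp_neg_le_ball hρ1 hρ_half hρ2
    (nonneg_of_mem_holderBall hω) (abs_schauderCoeff_le_of_mem_holderBall hb.le hω)
  exact eventually_exp_neg_rpow_le_of_geometric hρ hρ1 hr (by positivity) hη0.le hAη hball

lemma IsWienerMeasure.eventually_exp_neg_rpow_le_ball_of_mem_holderMinus {W : Measure PathSpace}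
    (hW : IsWienerMeasure W) {q η : ℝ} (hq : 0 < q) (hq2 : q ≤ 1 / 2) (hη : 2 / q - 2 < η)
    {ω : PathSpace} (hω : ω ∈ holderMinus q) :
    ∀ᶠ ε in 𝓝[>] (0 : ℝ), Real.exp (-(ε ^ (-η))) ≤ W.real (ball ω ε) := by
  have hη2 : 0 < η + 2 := by linarith [show 0 < 2 / q by positivity]
  have hlt : 2 / (η + 2) < q := (div_lt_comm₀ hη2 hq).2 (by linarith)
  obtain ⟨b, hηb, hbq⟩ := exists_between hlt
  have hb : 0 < b := (by positivity : 0 < 2 / (η + 2)).trans hηb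
  obtain ⟨C, hC⟩ := mem_iInter₂.1 hω b ⟨hb, hbq⟩
  refine hW.eventually_exp_neg_rpow_le_ball_of_mem_holderBall hb (hbq.trans_le hq2) ?_ hC
  linarith [(div_lt_comm₀ hη2 hb).1 hηb]

lemma IsWienerMeasure.holderCrit_subset_levelOrd {W : Measure PathSpace} (hW : IsWienerMeasure W)
    {q : ℝ} (hq : 0 < q) (hq2 : q ≤ 1 / 2) : holderCrit q ⊆ levelOrd W (2 / q - 2) := by
  have := hW.1
  have hpos : 0 < 2 / q - 2 := by linarith [(le_div_iff₀ hq).2 (by linarith : 4 * q ≤ 2)]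
  exact fun ω hω => mem_levelOrd hpos
    (fun η hη => hW.eventually_ball_le_of_mem_holderCrit hq hω hη.1 hη.2)
    fun η hη => hW.eventually_exp_neg_rpow_le_ball_of_mem_holderMinus hq hq2 hη hω.1

/-! ### Hausdorff orders -/

lemma hMeasAux_mono {X : Type*} [MetricSpace X] (h : ℝ → ℝ) (δ : ℝ≥0∞) {E F : Set X}
    (hEF : E ⊆ F) : hMeasAux h δ E ≤ hMeasAux h δ F :=
  le_iInf₂ fun c r => le_iInf₂ fun hr hF =>
    iInf₂_le_of_le c r (iInf₂_le_of_le hr (hEF.trans hF) le_rfl)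

lemma hMeas_mono {X : Type*} [MetricSpace X] (h : ℝ → ℝ) {E F : Set X} (hEF : E ⊆ F) :
    hMeas h E ≤ hMeas h F :=
  iSup₂_mono fun δ _ => hMeasAux_mono h δ hEF

lemma ordH_mono {A B : Set PathSpace} (hAB : A ⊆ B) : ordH A ≤ ordH B :=
  iSup₂_le fun α hα => le_iSup₂_of_le α
    ⟨hα.1, top_le_iff.1 (hα.2.symm.le.trans (hMeas_mono _ hAB))⟩ le_rfl

lemma le_ordH {A : Set PathSpace} {β : ℝ}
    (h : ∀ α, 0 < α → α < β → hMeas (fun ε : ℝ => Real.exp (-(ε ^ (-α)))) A = ∞) :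
    ENNReal.ofReal β ≤ ordH A := by
  refine le_of_forall_lt fun c hc => ?_
  obtain ⟨α, hcα, hαβ⟩ := exists_between ((ENNReal.lt_ofReal_iff_toReal_lt hc.ne_top).1 hc)
  have hα : 0 < α := ENNReal.toReal_nonneg.trans_lt hcα
  exact ((ENNReal.lt_ofReal_iff_toReal_lt hc.ne_top).2 hcα).trans_le
    (le_iSup₂_of_le α ⟨hα, h α hα hαβ⟩ le_rfl)

/-- Mass distribution principle. -/
lemma hMeas_range_eq_top {X Y : Type*} [MetricSpace X] [MeasurableSpace Y] (ν : Measure Y)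
    [IsProbabilityMeasure ν] (φ : Y → X) (h : ℝ → ℝ)
    (hν : ∀ M : ℕ, ∀ᶠ r in 𝓝[>] (0 : ℝ), ∀ x : X,
      (M : ℝ≥0∞) * ν (φ ⁻¹' ball x r) ≤ ENNReal.ofReal (h r)) :
    hMeas h (range φ) = ∞ := by
  refine ENNReal.eq_top_of_forall_nnreal_le fun M' => ?_
  obtain ⟨M, hM⟩ := exists_nat_ge M'
  refine (show (M' : ℝ≥0∞) ≤ M by exact_mod_cast hM).trans ?_
  obtain ⟨δ, hδ : 0 < δ, hδν⟩ := mem_nhdsGT_iff_exists_Ioc_subset.1 (hν M)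
  refine le_iSup₂_of_le (ENNReal.ofReal δ) (ENNReal.ofReal_pos.2 hδ) ?_
  refine le_iInf₂ fun c r => le_iInf₂ fun hr hcov => ?_
  have huniv : univ ⊆ ⋃ n, φ ⁻¹' ball (c n) (r n) := by
    rwa [← preimage_iUnion, univ_subset_iff, preimage_eq_univ_iff]
  calc (M : ℝ≥0∞) = M * ν univ := by rw [measure_univ, mul_one]
    _ ≤ M * ∑' n, ν (φ ⁻¹' ball (c n) (r n)) := by
        gcongr
        exact (measure_mono huniv).trans (measure_iUnion_le _)
    _ = ∑' n, M * ν (φ ⁻¹' ball (c n) (r n)) := ENNReal.tsum_mul_left.symm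
    _ ≤ ∑' n, ENNReal.ofReal (h (r n)) := ENNReal.tsum_le_tsum fun n =>
        hδν ⟨(hr n).1, (ENNReal.ofReal_le_ofReal_iff hδ.le).1 (hr n).2⟩ (c n)

/-- The law of a fair coin. -/
def coin : Measure Bool := (PMF.uniformOfFintype Bool).toMeasure

instance : IsProbabilityMeasure coin := PMF.toMeasure.isProbabilityMeasure _

lemma coin_singleton (b : Bool) : coin {b} = 1 / 2 := by
  rw [coin, PMF.toMeasure_apply_singleton _ _ (measurableSet_singleton b)]
  simp

/-- The law of a field of independent fair coins, indexed by the dyadic intervals. -/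
def coinField : Measure (DyadicIndex → Bool) := Measure.infinitePi fun _ => coin

instance : IsProbabilityMeasure coinField := by
  rw [coinField]
  infer_instance

lemma eq_of_critPath_mem_ball {q : ℝ} (hq : 0 < q) {s s' : DyadicIndex → Bool} {x : PathSpace}
    {r : ℝ} {i : DyadicIndex} (hr : 2 * r ≤ ((2 : ℝ) ^ (-q)) ^ i.1)
    (hs : critPath hq s ∈ ball x r) (hs' : critPath hq s' ∈ ball x r) : s i = s' i := by
  by_contra hne
  have hdist : dist (critPath hq s) (critPath hq s') < r + r :=
    (dist_triangle_right _ _ x).trans_lt (add_lt_add hs hs')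
  have hcoeff :=
    abs_schauderCoeff_some_le (abs_apply_sub_le_dist (critPath hq s) (critPath hq s')) i
  rw [schauderCoeff_sub, schauderCoeff_critPath_some, schauderCoeff_critPath_some, ← mul_sub,
    abs_mul, abs_boolSign_sub hne, abs_of_pos (by positivity)] at hcoeff
  linarith

lemma coinField_preimage_ball_le {q : ℝ} (hq : 0 < q) (x : PathSpace) {r : ℝ} {k : ℕ}
    (hr : 2 * r ≤ ((2 : ℝ) ^ (-q)) ^ k) :
    coinField (critPath hq ⁻¹' ball x r) ≤ (1 / 2) ^ 2 ^ k := by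
  rcases (critPath hq ⁻¹' ball x r).eq_empty_or_nonempty with hempty | ⟨s₀, hs₀⟩
  · simp [hempty]
  set level : Finset DyadicIndex := Finset.univ.map (Function.Embedding.sigmaMk k) with hlevel
  have hsub : critPath hq ⁻¹' ball x r ⊆ Set.pi level fun i => {s₀ i} := by
    intro s hs i hi
    obtain ⟨j, -, rfl⟩ := Finset.mem_map.1 hi
    exact eq_of_critPath_mem_ball hq hr hs hs₀
  refine (measure_mono hsub).trans (le_of_eq ?_)
  rw [coinField, Measure.infinitePi_pi _ fun i _ => measurableSet_singleton _]
  simp [coin_singleton, hlevel]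

lemma rpow_neg_le_of_two_rpow_pow_lt {q x : ℝ} (hq : 0 < q) {n : ℕ}
    (h : ((2 : ℝ) ^ (-q)) ^ n < x) : x ^ (-(1 / q)) ≤ 2 ^ n := by
  calc x ^ (-(1 / q)) ≤ (((2 : ℝ) ^ (-q)) ^ n) ^ (-(1 / q)) :=
        Real.rpow_le_rpow_of_nonpos (by positivity) h.le (neg_nonpos.2 (by positivity))
    _ = 2 ^ n := by
        rw [two_rpow_pow_eq_rpow, ← Real.rpow_mul (by positivity), neg_mul_neg,
          mul_one_div_cancel hq.ne', Real.rpow_one]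

lemma eventually_exists_mul_half_pow_le {q α : ℝ} (hq : 0 < q) (hα : 0 < α) (hαq : α < 1 / q)
    (M : ℕ) : ∀ᶠ r in 𝓝[>] (0 : ℝ), ∃ k, 2 * r ≤ ((2 : ℝ) ^ (-q)) ^ k ∧
      (M : ℝ) * (1 / 2) ^ 2 ^ k ≤ Real.exp (-(r ^ (-α))) := by
  filter_upwards [eventually_rpow_neg_le (show 0 < 2 ^ (-(1 / q)) / 8 by positivity) hαq,
    (tendsto_rpow_neg_nhdsGT_zero (neg_neg_iff_pos.2 hα)).eventually_ge_atTop (Real.log M),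
    Ioo_mem_nhdsGT (show (0 : ℝ) < 1 / 2 by norm_num)] with r hrα hM ⟨hr, hr2⟩
  obtain ⟨k, hk, hk'⟩ := exists_nat_pow_near_of_lt_one (x := 2 * r) (by positivity)
    (by linarith) (by positivity) (two_rpow_neg_lt_one hq)
  refine ⟨k, hk', ?_⟩
  have hrk := rpow_neg_le_of_two_rpow_pow_lt hq hk
  rw [Real.mul_rpow two_pos.le hr.le, pow_succ] at hrk
  rcases M.eq_zero_or_pos with rfl | hM0
  · simp [Real.exp_nonneg]
  have hcost : Real.log M + r ^ (-α) ≤ 2 ^ k * Real.log 2 := by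
    nlinarith [Real.log_two_gt_d9, show (0 : ℝ) < 2 ^ k by positivity]
  rw [← Real.log_le_iff_le_exp (by positivity), Real.log_mul (by positivity) (by positivity),
    Real.log_pow, one_div, Real.log_inv]
  push_cast
  linarith

lemma hMeas_range_critPath {q α : ℝ} (hq : 0 < q) (hα : 0 < α) (hαq : α < 1 / q) :
    hMeas (fun ε : ℝ => Real.exp (-(ε ^ (-α)))) (range (critPath hq)) = ∞ := by
  refine hMeas_range_eq_top coinField (critPath hq) _ fun M => ?_
  filter_upwards [eventually_exists_mul_half_pow_le hq hα hαq M] with r ⟨k, hrk, hMk⟩ x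
  calc (M : ℝ≥0∞) * coinField (critPath hq ⁻¹' ball x r) ≤ M * (1 / 2) ^ 2 ^ k := by
        gcongr
        exact coinField_preimage_ball_le hq x hrk
    _ = ENNReal.ofReal (M * (1 / 2) ^ 2 ^ k) := by
        rw [ENNReal.ofReal_mul (by positivity), ENNReal.ofReal_natCast,
          ENNReal.ofReal_pow (by norm_num), ENNReal.ofReal_div_of_pos two_pos]
        simp
    _ ≤ ENNReal.ofReal (Real.exp (-(r ^ (-α)))) := ENNReal.ofReal_le_ofReal hMk

lemma le_ordH_range_critPath {q : ℝ} (hq : 0 < q) :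
    ENNReal.ofReal (1 / q) ≤ ordH (range (critPath hq)) :=
  le_ordH fun _ hα hαq => hMeas_range_critPath hq hα hαq

lemma hMeas_iUnion_eq_zero {X : Type*} [MetricSpace X] {h : ℝ → ℝ} {E : ℕ → Set X}
    (hE : ∀ m, ∀ δ > 0, ∀ κ > 0, ∃ (s : Finset X) (r : ℝ), s.Nonempty ∧ 0 < r ∧
      ENNReal.ofReal r ≤ δ ∧ E m ⊆ ⋃ x ∈ s, ball x r ∧ (s.card : ℝ≥0∞) * ENNReal.ofReal (h r) ≤ κ) :
    hMeas h (⋃ m, E m) = 0 := by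
  refine le_antisymm (iSup₂_le fun δ hδ => ENNReal.le_of_forall_pos_le_add fun κ hκ _ => ?_) bot_le
  obtain ⟨κ', hκ', hκ'_sum⟩ :=
    ENNReal.exists_pos_sum_of_countable' (ENNReal.coe_ne_zero.2 hκ.ne') ℕ
  choose s r hs hr hrδ hcov hcost using fun m => hE m δ hδ (κ' m) (hκ' m)
  have : Infinite (Σ m, s m) :=
    Infinite.of_injective (fun m => ⟨m, (hs m).choose, (hs m).choose_spec⟩) fun _ _ hab =>
      congrArg Sigma.fst hab
  obtain ⟨_⟩ := nonempty_denumerable (Σ m, s m)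
  let e := (Denumerable.eqv (Σ m, s m)).symm
  refine (iInf₂_le_of_le (fun n => ((e n).2 : X)) (fun n => r (e n).1)
    (iInf₂_le_of_le (fun n => ⟨hr _, hrδ _⟩) ?_ le_rfl)).trans ?_
  · refine iUnion_subset fun m x hx => ?_
    obtain ⟨y, hy, hxy⟩ := mem_iUnion₂.1 (hcov m hx)
    obtain ⟨n, hn⟩ := e.surjective ⟨m, y, hy⟩
    refine mem_iUnion.2 ⟨n, show x ∈ ball ((e n).2 : X) (r (e n).1) from ?_⟩
    rwa [hn]
  · calc ∑' n, ENNReal.ofReal (h (r (e n).1))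
        = ∑' p : Σ m, s m, ENNReal.ofReal (h (r p.1)) :=
          e.tsum_eq fun p : Σ m, s m => ENNReal.ofReal (h (r p.1))
      _ = ∑' m, (s m).card * ENNReal.ofReal (h (r m)) := by
          simp [ENNReal.tsum_sigma fun m (_ : s m) => ENNReal.ofReal (h (r m))]
      _ ≤ ∑' m, κ' m := ENNReal.tsum_le_tsum hcost
      _ ≤ 0 + κ := by
          rw [zero_add]
          exact hκ'_sum.le

lemma abs_sub_lt_of_floor_div_eq {x y r : ℝ} (hr : 0 < r) (h : ⌊x / r⌋ = ⌊y / r⌋) :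
    |x - y| < r := by
  have hlt := Int.abs_sub_lt_one_of_floor_eq_floor h
  rwa [← sub_div, abs_div, abs_of_pos hr, div_lt_one hr] at hlt

lemma exists_abs_sub_gridPt_le {n : ℕ} (hn : 0 < n) (t : unitInterval) :
    ∃ i ≤ n, |(t : ℝ) - gridPt n i| ≤ (n : ℝ)⁻¹ := by
  have hn' : (0 : ℝ) < n := by exact_mod_cast hn
  have ht0 := t.2.1
  have hin : ⌊(t : ℝ) * n⌋₊ ≤ n :=
    Nat.floor_le_of_le (mul_le_of_le_one_left hn'.le t.2.2)
  refine ⟨⌊(t : ℝ) * n⌋₊, hin, ?_⟩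
  have hle := Nat.floor_le (show 0 ≤ (t : ℝ) * n by positivity)
  have hlt := Nat.lt_floor_add_one ((t : ℝ) * n)
  rw [coe_gridPt hin, sub_div' hn'.ne', abs_div, abs_of_pos hn', abs_of_nonneg (by linarith),
    ← one_div]
  gcongr
  linarith

lemma dist_lt_of_floor_eq {b C : ℝ} (hb : 0 ≤ b) (hC : 0 < C) {n : ℕ} (hn : 0 < n)
    {ω ω' : PathSpace} (hω : ω ∈ holderBall b C) (hω' : ω' ∈ holderBall b C)
    (hfloor : ∀ i ≤ n, ⌊ω.1 (gridPt n i) / (C * (n : ℝ) ^ (-b))⌋ =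
      ⌊ω'.1 (gridPt n i) / (C * (n : ℝ) ^ (-b))⌋) :
    dist ω ω' < 4 * (C * (n : ℝ) ^ (-b)) := by
  have hn' : (0 : ℝ) < n := by exact_mod_cast hn
  set r := C * (n : ℝ) ^ (-b) with hr
  have hr0 : 0 < r := by positivity
  refine lt_of_le_of_lt ((ContinuousMap.dist_le (C := 3 * r) (by positivity)).2 fun t => ?_)
    (by linarith)
  obtain ⟨i, hi, hti⟩ := exists_abs_sub_gridPt_le hn t
  have hpow : C * |(t : ℝ) - gridPt n i| ^ b ≤ r := by
    rw [hr, Real.rpow_neg hn'.le, ← Real.inv_rpow hn'.le]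
    gcongr
  have hω_near := abs_le.1 ((hω t (gridPt n i)).trans hpow)
  have hω'_near := abs_le.1 ((hω' t (gridPt n i)).trans hpow)
  have hgrid := abs_lt.1 (abs_sub_lt_of_floor_div_eq hr0 (hfloor i hi))
  rw [Real.dist_eq, abs_le]
  constructor <;> linarith [hω_near.1, hω_near.2, hω'_near.1, hω'_near.2, hgrid.1, hgrid.2]

lemma abs_apply_le_of_mem_holderBall {b C : ℝ} (hb : 0 ≤ b) {ω : PathSpace}
    (hω : ω ∈ holderBall b C) (t : unitInterval) : |ω.1 t| ≤ C := by
  have h := hω t 0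
  rw [ω.2, sub_zero] at h
  exact h.trans (mul_le_of_le_one_right (nonneg_of_mem_holderBall hω)
    (Real.rpow_le_one (abs_nonneg _) (abs_coe_sub_le_one t 0) hb))

lemma floor_mem_Icc_of_mem_holderBall {b C : ℝ} (hb : 0 ≤ b) (hb1 : b ≤ 1) (hC : 0 < C) {n : ℕ}
    (hn : 0 < n) {ω : PathSpace} (hω : ω ∈ holderBall b C) (t : unitInterval) :
    ⌊ω.1 t / (C * (n : ℝ) ^ (-b))⌋ ∈ Finset.Icc (-(n : ℤ)) n := by
  have hn' : (0 : ℝ) < n := by exact_mod_cast hn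
  have hn1 : (1 : ℝ) ≤ n * (n : ℝ) ^ (-b) := by
    rw [mul_comm, ← Real.rpow_add_one hn'.ne']
    exact Real.one_le_rpow (by exact_mod_cast hn) (by linarith)
  have habs : |ω.1 t / (C * (n : ℝ) ^ (-b))| ≤ n := by
    rw [abs_div, abs_of_pos (show 0 < C * (n : ℝ) ^ (-b) by positivity),
      div_le_iff₀ (by positivity)]
    nlinarith [abs_apply_le_of_mem_holderBall hb hω t]
  obtain ⟨hlower, hupper⟩ := abs_le.1 habs
  rw [Finset.mem_Icc]
  exact ⟨Int.le_floor.2 (by push_cast; exact hlower),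
    by exact_mod_cast (Int.floor_le _).trans hupper⟩

lemma exists_finset_cover_holderBall {b C : ℝ} (hb : 0 ≤ b) (hb1 : b ≤ 1) (hC : 0 < C) {n : ℕ}
    (hn : 0 < n) : ∃ s : Finset PathSpace, s.Nonempty ∧ s.card ≤ (2 * n + 1) ^ (n + 1) ∧
      holderBall b C ⊆ ⋃ x ∈ s, ball x (4 * (C * (n : ℝ) ^ (-b))) := by
  classical
  have hcenter (v : Fin (n + 1) → Finset.Icc (-(n : ℤ)) n) : ∃ x : PathSpace,
      ∀ ω ∈ holderBall b C,
        (∀ i : Fin (n + 1), ⌊ω.1 (gridPt n i) / (C * (n : ℝ) ^ (-b))⌋ = v i) →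
        dist ω x < 4 * (C * (n : ℝ) ^ (-b)) := by
    by_cases hv : ∃ x ∈ holderBall b C,
      ∀ i : Fin (n + 1), ⌊x.1 (gridPt n i) / (C * (n : ℝ) ^ (-b))⌋ = v i
    · obtain ⟨x, hx, hxv⟩ := hv
      exact ⟨x, fun ω hω h => dist_lt_of_floor_eq hb hC hn hω hx fun i hi =>
        (h ⟨i, by lia⟩).trans (hxv ⟨i, by lia⟩).symm⟩
    · exact ⟨⟨0, by simp⟩, fun ω hω h => absurd ⟨ω, hω, h⟩ hv⟩
  choose c hc using hcenter
  refine ⟨Finset.univ.image c, ⟨c fun _ => ⟨0, by simp⟩, Finset.mem_image_of_mem c (by simp)⟩,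
    Finset.card_image_le.trans (le_of_eq ?_), fun ω hω => ?_⟩
  · rw [Finset.card_univ, Fintype.card_fun, Fintype.card_coe, Int.card_Icc, Fintype.card_fin]
    congr 1
    lia
  · exact mem_iUnion₂.2 ⟨_, Finset.mem_image_of_mem c (Finset.mem_univ
      fun i => ⟨_, floor_mem_Icc_of_mem_holderBall hb hb1 hC hn hω (gridPt n i)⟩),
      hc _ ω hω fun _ => rfl⟩

lemma eventually_succ_mul_log_le {c β : ℝ} (hc : 0 < c) (hβ : 1 < β) :
    ∀ᶠ n : ℕ in atTop, ((n + 1 : ℕ) : ℝ) * Real.log ((2 * n + 1 : ℕ) : ℝ) ≤ c * (n : ℝ) ^ β := by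
  have hlog := (isLittleO_log_rpow_atTop (sub_pos.2 hβ)).bound (show 0 < c / 3 ^ β by positivity)
  have hmul : Tendsto (fun n : ℕ => (3 * n : ℝ)) atTop atTop :=
    tendsto_natCast_atTop_atTop.const_mul_atTop three_pos
  filter_upwards [hmul.eventually hlog, eventually_gt_atTop 0] with n hn hn0
  have hn1 : (1 : ℝ) ≤ n := by exact_mod_cast hn0
  rw [Real.norm_eq_abs, Real.norm_eq_abs, abs_of_nonneg (Real.log_nonneg (by linarith)),
    abs_of_nonneg (by positivity)] at hn
  calc ((n + 1 : ℕ) : ℝ) * Real.log ((2 * n + 1 : ℕ) : ℝ)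
      ≤ (3 * n) * Real.log (3 * n) := by
        have hlog0 : 0 ≤ Real.log ((2 * n + 1 : ℕ) : ℝ) := Real.log_natCast_nonneg _
        push_cast at hlog0 ⊢
        gcongr <;> linarith
    _ ≤ (3 * n) * (c / 3 ^ β * (3 * n : ℝ) ^ (β - 1)) := by gcongr
    _ = c / 3 ^ β * (3 * n : ℝ) ^ β := by
        rw [mul_left_comm, ← Real.rpow_one_add' (by positivity) (by linarith), add_sub_cancel]
    _ = c * (n : ℝ) ^ β := by
        rw [Real.mul_rpow three_pos.le n.cast_nonneg]
        field_simp

lemma tendsto_pow_succ_mul_exp_neg_rpow {c β : ℝ} (hc : 0 < c) (hβ : 1 < β) :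
    Tendsto (fun n : ℕ => ((2 * n + 1 : ℕ) : ℝ) ^ (n + 1) * Real.exp (-(c * (n : ℝ) ^ β)))
      atTop (𝓝 0) := by
  have hlim : Tendsto (fun n : ℕ => Real.exp (-(c / 2 * (n : ℝ) ^ β))) atTop (𝓝 0) :=
    Real.tendsto_exp_neg_atTop_nhds_zero.comp (((tendsto_rpow_atTop (by linarith)).comp
      tendsto_natCast_atTop_atTop).const_mul_atTop (half_pos hc))
  refine squeeze_zero' (Eventually.of_forall fun n => by positivity) ?_ hlim
  filter_upwards [eventually_succ_mul_log_le (half_pos hc) hβ] with n hn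
  rw [← Real.exp_log (show (0 : ℝ) < ((2 * n + 1 : ℕ) : ℝ) ^ (n + 1) by positivity), Real.log_pow,
    ← Real.exp_add]
  gcongr
  linarith

lemma exists_finset_cover_holderBall_cost_le {b α C : ℝ} (hb : 0 < b) (hb1 : b ≤ 1)
    (hbα : 1 < b * α) (hC : 0 < C) {δ κ : ℝ≥0∞} (hδ : 0 < δ) (hκ : 0 < κ) :
    ∃ (s : Finset PathSpace) (r : ℝ), s.Nonempty ∧ 0 < r ∧ ENNReal.ofReal r ≤ δ ∧
      holderBall b C ⊆ ⋃ x ∈ s, ball x r ∧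
      (s.card : ℝ≥0∞) * ENNReal.ofReal (Real.exp (-(r ^ (-α)))) ≤ κ := by
  have hradius : Tendsto (fun n : ℕ => ENNReal.ofReal (4 * (C * (n : ℝ) ^ (-b)))) atTop (𝓝 0) := by
    simpa using ENNReal.tendsto_ofReal ((((tendsto_rpow_neg_atTop hb).comp
      tendsto_natCast_atTop_atTop).const_mul C).const_mul 4)
  have hcost := ENNReal.tendsto_ofReal (tendsto_pow_succ_mul_exp_neg_rpow
    (show 0 < (4 * C) ^ (-α) by positivity) hbα)
  rw [ENNReal.ofReal_zero] at hcost
  obtain ⟨n, hn, hnδ, hnκ⟩ := ((eventually_gt_atTop 0).and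
    ((hradius.eventually_le_const hδ).and (hcost.eventually_le_const hκ))).exists
  obtain ⟨s, hs, hcard, hcov⟩ := exists_finset_cover_holderBall hb.le hb1 hC hn
  have hn' : (0 : ℝ) < n := by exact_mod_cast hn
  have hpow : (4 * (C * (n : ℝ) ^ (-b))) ^ (-α) = (4 * C) ^ (-α) * (n : ℝ) ^ (b * α) := by
    rw [← mul_assoc, Real.mul_rpow (by positivity) (by positivity),
      ← Real.rpow_mul hn'.le, neg_mul_neg]
  refine ⟨s, 4 * (C * (n : ℝ) ^ (-b)), hs, by positivity, hnδ, hcov, le_trans ?_ hnκ⟩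
  rw [hpow, ENNReal.ofReal_mul (by positivity), ← Nat.cast_pow, ENNReal.ofReal_natCast]
  gcongr

lemma hMeas_holderSet_eq_zero {b α : ℝ} (hb : 0 < b) (hb1 : b ≤ 1) (hbα : 1 < b * α) :
    hMeas (fun ε : ℝ => Real.exp (-(ε ^ (-α)))) (holderSet b) = 0 := by
  have hsub : holderSet b ⊆ ⋃ m : ℕ, holderBall b (m + 1) := by
    rintro ω ⟨C, hC⟩
    obtain ⟨m, hm⟩ := exists_nat_ge C
    refine mem_iUnion.2 ⟨m, fun x y => (hC x y).trans ?_⟩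
    gcongr
    linarith
  refine le_antisymm ((hMeas_mono _ hsub).trans_eq (hMeas_iUnion_eq_zero fun m δ hδ κ hκ => ?_))
    bot_le
  exact exists_finset_cover_holderBall_cost_le hb hb1 hbα (by positivity) hδ hκ

lemma ordH_holderMinus_le {q : ℝ} (hq : 0 < q) (hq1 : q ≤ 1) :
    ordH (holderMinus q) ≤ ENNReal.ofReal (1 / q) := by
  refine iSup₂_le fun α ⟨hα, htop⟩ => ENNReal.ofReal_le_ofReal ?_
  by_contra! hlt
  obtain ⟨b, hαb, hbq⟩ := exists_between ((div_lt_comm₀ hq hα).1 hlt)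
  have hb : 0 < b := (one_div_pos.2 hα).trans hαb
  have hzero := hMeas_holderSet_eq_zero hb (hbq.le.trans hq1) ((div_lt_iff₀ hα).1 hαb)
  have hsub : holderMinus q ⊆ holderSet b := fun ω hω => mem_iInter₂.1 hω b ⟨hb, hbq⟩
  exact absurd ((hMeas_mono _ hsub).trans_eq hzero) (by simp [htop])

/-! ### The critical level sets -/

lemma IsWienerMeasure.levelOrd_inter_pathCrit_subset_holderMinus {W : Measure PathSpace}
    (hW : IsWienerMeasure W) {q : ℝ} (hq : 0 < q) (hq1 : q < 1) :
    levelOrd W (2 / q - 2) ∩ pathCrit ⊆ holderMinus q := by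
  have hξ : 0 < 2 / q - 2 := sub_pos.2 ((lt_div_iff₀ hq).2 (by linarith))
  rintro ω ⟨hω, hcrit⟩
  obtain ⟨q', hq', hω'⟩ := mem_iUnion₂.1 hcrit
  have hqq' : q ≤ q' := by
    by_contra! hlt
    have hξ_lt : 2 / q - 2 < 2 / q' - 2 :=
      sub_lt_sub_right (div_lt_div_of_pos_left two_pos hq'.1 hlt) 2
    obtain ⟨η, hξη, hη⟩ := exists_between hξ_lt
    exact hξη.not_ge (le_of_mem_levelOrd hξ hω
      (hW.eventually_ball_le_of_mem_holderCrit hq'.1 hω' (hξ.trans hξη) hη))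
  exact mem_iInter₂.2 fun b hb => mem_iInter₂.1 hω'.1 b ⟨hb.1, hb.2.trans_le hqq'⟩

lemma IsWienerMeasure.range_critPath_subset_levelOrd_inter_pathCrit {W : Measure PathSpace}
    (hW : IsWienerMeasure W) {q : ℝ} (hq : 0 < q) (hq2 : q ≤ 1 / 2) :
    range (critPath hq) ⊆ levelOrd W (2 / q - 2) ∩ pathCrit := by
  rintro _ ⟨s, rfl⟩
  have hcrit := critPath_mem_holderCrit hq (by linarith) s
  exact ⟨hW.holderCrit_subset_levelOrd hq hq2 hcrit, mem_iUnion₂.2 ⟨q, ⟨hq, by linarith⟩, hcrit⟩⟩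

lemma IsWienerMeasure.ordH_levelOrd_inter_pathCrit {W : Measure PathSpace}
    (hW : IsWienerMeasure W) {q : ℝ} (hq : 0 < q) (hq2 : q ≤ 1 / 2) :
    ordH (levelOrd W (2 / q - 2) ∩ pathCrit) = ENNReal.ofReal (1 / q) := by
  refine le_antisymm ?_ ((le_ordH_range_critPath hq).trans
    (ordH_mono (hW.range_critPath_subset_levelOrd_inter_pathCrit hq hq2)))
  exact (ordH_mono (hW.levelOrd_inter_pathCrit_subset_holderMinus hq (by linarith))).trans
    (ordH_holderMinus_le hq (by linarith))

end

/-- **Multifractal spectrum of the Wiener measure.** For `ξ ≥ 2` the level set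
`E^crit(ξ) = E(ξ) ∩ Ω^crit` is non-empty with Hausdorff order `1 + ξ/2`, and
consequently `ord_H E(ξ) ≥ 1 + ξ/2`; for `0 < ξ < 2` the level set `E(ξ)` is
empty. -/
theorem wiener_multifractal_spectrum (W : Measure PathSpace) (hW : IsWienerMeasure W) :
    (∀ ξ : ℝ, 2 ≤ ξ →
      (levelOrd W ξ ∩ pathCrit).Nonempty ∧
      ordH (levelOrd W ξ ∩ pathCrit) = ENNReal.ofReal (1 + ξ / 2) ∧
      ENNReal.ofReal (1 + ξ / 2) ≤ ordH (levelOrd W ξ)) ∧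
    (∀ ξ : ℝ, 0 < ξ → ξ < 2 → levelOrd W ξ = ∅) := by
  refine ⟨fun ξ hξ => ?_, fun ξ hξ hξ2 => hW.levelOrd_eq_empty hξ hξ2⟩
  obtain ⟨q, hq, hξq⟩ : ∃ q > 0, ξ = 2 / q - 2 :=
    ⟨2 / (ξ + 2), by positivity, by rw [div_div_cancel₀ two_ne_zero, add_sub_cancel_right]⟩
  have hq2 : q ≤ 1 / 2 := by
    have : 4 ≤ 2 / q := by linarith
    rw [le_div_iff₀ hq] at this
    linarith
  have hord : ordH (levelOrd W ξ ∩ pathCrit) = ENNReal.ofReal (1 + ξ / 2) := by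
    rw [show 1 + ξ / 2 = 1 / q by rw [hξq]; ring, hξq]
    exact hW.ordH_levelOrd_inter_pathCrit hq hq2
  refine ⟨?_, hord, hord.ge.trans (ordH_mono inter_subset_left)⟩
  exact hξq ▸ (range_nonempty _).mono (hW.range_critPath_subset_levelOrd_inter_pathCrit hq hq2)

end Multifractal
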